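/- arXiv:2405.04617 — 6 statements merged into one kernel-verified Lean document; each statement's English description precedes it below -/
import Mathlib

section
/- For all positive integers μ and t, there exists an integer K(μ,t) such that the following holds: every finite simple K_{t,t}-free graph G whose induced matching treewidth is at most μ has tree-independence number strictly less than K(μ,t). -/
open SimpleGraph

/-- A tree decomposition of a (finite, simple) graph `G`: a finite tree `T` together with
bags `bag x ⊆ V` such that every vertex is in a bag, every edge is inside some bag, and for
every vertex the set of nodes whose bag contains it induces a connected subtree of `T`. -/
structure TreeDecomp {V : Type} (G : SimpleGraph V) where
  ι : Type
  fintype_ι : Fintype ι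
  T : SimpleGraph ι
  isTree : T.IsTree
  bag : ι → Set V
  mem_bag : ∀ v : V, ∃ x : ι, v ∈ bag x
  edge_bag : ∀ ⦃u v : V⦄, G.Adj u v → ∃ x : ι, u ∈ bag x ∧ v ∈ bag x
  bag_conn : ∀ v : V, (T.induce {x : ι | v ∈ bag x}).Connected

/-- `a`, `b` enumerate the endpoints of an induced matching of size `n` in `G`:
the edges `a i — b i` are present, and endpoints of distinct edges are pairwise distinct
and non-adjacent. -/
def IsIndMatching {V : Type} (G : SimpleGraph V) {n : ℕ} (a b : Fin n → V) : Prop :=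
  (∀ i, G.Adj (a i) (b i)) ∧
  ∀ i j : Fin n, i ≠ j →
    a i ≠ a j ∧ a i ≠ b j ∧ b i ≠ a j ∧ b i ≠ b j ∧
    ¬ G.Adj (a i) (a j) ∧ ¬ G.Adj (a i) (b j) ∧ ¬ G.Adj (b i) (a j) ∧ ¬ G.Adj (b i) (b j)

/-- `μ(T,β) ≤ μ`: every induced matching touching a bag of the decomposition has size at
most `μ`. -/
def TreeDecomp.MuLE {V : Type} {G : SimpleGraph V} (td : TreeDecomp G) (μ : ℕ) : Prop :=
  ∀ (x : td.ι) (n : ℕ) (a b : Fin n → V),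
    IsIndMatching G a b → (∀ i, a i ∈ td.bag x ∨ b i ∈ td.bag x) → n ≤ μ

/-- `α(T,β) ≤ k`: every independent set contained in a single bag has size at most `k`. -/
def TreeDecomp.AlphaLE {V : Type} {G : SimpleGraph V} (td : TreeDecomp G) (k : ℕ) : Prop :=
  ∀ (x : td.ι) (I : Finset V), ↑I ⊆ td.bag x →
    ((I : Set V)).Pairwise (fun u v => ¬ G.Adj u v) → I.card ≤ k

/-- The induced matching treewidth `tree-μ(G)`: the least `n` admitting a tree decomposition
with `μ(T,β) ≤ n`. -/
noncomputable def treeMu {V : Type} (G : SimpleGraph V) : ℕ :=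
  sInf {n | ∃ td : TreeDecomp G, td.MuLE n}

/-- The tree-independence number `tree-α(G)`: the least `n` admitting a tree decomposition
with `α(T,β) ≤ n`. -/
noncomputable def treeAlpha {V : Type} (G : SimpleGraph V) : ℕ :=
  sInf {n | ∃ td : TreeDecomp G, td.AlphaLE n}

/-!
Call a vertex low if its neighbourhood has small independence number, and high otherwise.

An independent set of high vertices inside a bag is bounded: since `G` is `K_{t,t}`-free, few
vertices of an independent set have `t` or more neighbours in another independent set of bounded
size, so from many high vertices one extracts `μ + 1` whose neighbourhoods barely interact, and
picking private, pairwise non-adjacent neighbours gives an induced matching of size `μ + 1` touching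
the bag.

The low vertices of a bag may contain large independent sets, so the decomposition has to be
changed. Let `A` be a maximal independent set of low vertices. Replace every `a ∈ A` in the bags by
its neighbours and attach a new leaf with bag `N[a]`. The new leaves are harmless as `a` is low.
An old bag `β(x)` now consists of high vertices of `β(x)` and of vertices joined to `A` by an edge
that touches `β(x)`, as every low vertex outside `A` has a neighbour in `A`. An independent set of
the latter kind is bounded as well: each endpoint in `A` sees boundedly many of its members, so a
positive fraction of these edges forms an induced matching touching `β(x)`.
-/

open scoped Finset

section Counting

variable {α ι : Type*}

lemma exists_card_in_le_of_forall_card_out_le (r : α → α → Prop) [DecidableRel r]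
    {d : ℕ} {J : Finset α} (hJ : J.Nonempty) (hr : ∀ a ∈ J, #{b ∈ J | r a b} ≤ d) :
    ∃ b ∈ J, #{a ∈ J | r a b} ≤ d := by
  by_contra! h
  have hcard : #J * (d + 1) ≤ #J * d := Finset.card_mul_le_card_mul' r h hr
  have hpos : 0 < #J := hJ.card_pos
  linarith

lemma exists_subset_pairwise_not_of_card_out_le (r : α → α → Prop) [DecidableRel r] {d n : ℕ}
    {J : Finset α} (hr : ∀ a ∈ J, #{b ∈ J | r a b} ≤ d) (hn : n * (2 * d + 1) ≤ #J) :
    ∃ K ⊆ J, #K = n ∧ (K : Set α).Pairwise fun a b => ¬ r a b := by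
  classical
  induction n generalizing J with
  | zero => exact ⟨∅, by simp⟩
  | succ n ih =>
    have hne : J.Nonempty := Finset.card_pos.1 (by linarith [Nat.zero_le (n * (2 * d + 1))])
    obtain ⟨b, hb, hin⟩ := exists_card_in_le_of_forall_card_out_le r hne hr
    let J' := {a ∈ J | a ≠ b ∧ ¬ r b a ∧ ¬ r a b}
    have hcover : J ⊆ J' ∪ insert b ({a ∈ J | r b a} ∪ {a ∈ J | r a b}) := fun a ha => by
      simp only [J', Finset.mem_union, Finset.mem_insert, Finset.mem_filter]
      tauto
    have hJ' : #J ≤ #J' + (2 * d + 1) := by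
      have hout := hr b hb
      have hcard := (Finset.card_le_card hcover).trans (Finset.card_union_le _ _)
      have hinsert := Finset.card_insert_le b ({a ∈ J | r b a} ∪ {a ∈ J | r a b})
      have hunion := Finset.card_union_le {a ∈ J | r b a} {a ∈ J | r a b}
      omega
    obtain ⟨K, hKJ', hK, hKr⟩ := ih (J := J')
      (fun a ha => le_trans
        (Finset.card_le_card (Finset.filter_subset_filter _ (Finset.filter_subset _ _)))
        (hr a (Finset.mem_of_mem_filter a ha)))
      (by linarith)
    have hKb : ∀ a ∈ K, a ≠ b ∧ ¬ r b a ∧ ¬ r a b := fun a ha => (Finset.mem_filter.1 (hKJ' ha)).2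
    refine ⟨insert b K, Finset.insert_subset hb (hKJ'.trans (Finset.filter_subset _ _)), ?_, ?_⟩
    · rw [Finset.card_insert_of_notMem fun hbK => (hKb b hbK).1 rfl, hK]
    · rw [Finset.coe_insert, Set.pairwise_insert]
      exact ⟨hKr, fun a ha _ => (hKb a ha).2⟩

lemma card_le_card_filter_forall_not_add (p : ι → α → Prop) [∀ i, DecidablePred (p i)]
    {s : Finset ι} {S : Finset α} {c : ℕ} (hp : ∀ i ∈ s, #{x ∈ S | p i x} ≤ c) :
    #S ≤ #{x ∈ S | ∀ i ∈ s, ¬ p i x} + #s * c := by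
  classical
  have hcover : S ⊆ {x ∈ S | ∀ i ∈ s, ¬ p i x} ∪ s.biUnion fun i => {x ∈ S | p i x} := by
    intro x hx
    simp only [Finset.mem_union, Finset.mem_filter, Finset.mem_biUnion]
    grind
  calc #S ≤ _ := Finset.card_le_card hcover
    _ ≤ _ := Finset.card_union_le _ _
    _ ≤ _ := Nat.add_le_add_left (Finset.card_biUnion_le_card_mul _ _ _ hp) _

end Counting

section Independence

variable {V : Type*} {G : SimpleGraph V}

lemma not_adj_of_isIndepSet {S : Set V} (hS : G.IsIndepSet S) {u v : V} (hu : u ∈ S)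
    (hv : v ∈ S) : ¬ G.Adj u v :=
  fun huv => hS hu hv huv.ne huv

lemma isIndepSet_insert_iff {S : Set V} {v : V} :
    G.IsIndepSet (insert v S) ↔ G.IsIndepSet S ∧ ∀ u ∈ S, ¬ G.Adj v u := by
  refine ⟨fun h => ⟨h.mono (Set.subset_insert v S), fun u hu =>
    not_adj_of_isIndepSet h (Set.mem_insert v S) (Set.mem_insert_of_mem v hu)⟩, ?_⟩
  rintro ⟨hS, hv⟩
  exact Set.pairwise_insert.2 ⟨hS, fun u hu _ => ⟨hv u hu, fun huv => hv u hu huv.symm⟩⟩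

/-- `α(G[S]) ≤ k`, stated through finite independent sets so that it also makes sense for
infinite `S`. On a bag this is the bound of `TreeDecomp.AlphaLE`; on a neighbourhood it bounds
the induced stars with a given centre. -/
def AlphaLEOn (G : SimpleGraph V) (S : Set V) (k : ℕ) : Prop :=
  ∀ I : Finset V, ↑I ⊆ S → G.IsIndepSet I → #I ≤ k

namespace AlphaLEOn

variable {S T : Set V} {k l : ℕ}

lemma mono (h : AlphaLEOn G T k) (hST : S ⊆ T) (hkl : k ≤ l) : AlphaLEOn G S l :=
  fun I hI hind => (h I (hI.trans hST) hind).trans hkl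

lemma union (hS : AlphaLEOn G S k) (hT : AlphaLEOn G T l) : AlphaLEOn G (S ∪ T) (k + l) := by
  classical
  intro I hI hind
  rw [← Finset.card_filter_add_card_filter_not (s := I) (· ∈ S)]
  refine add_le_add (hS _ (fun v hv => ?_) (hind.mono ?_))
    (hT _ (fun v hv => ?_) (hind.mono ?_))
  · exact (Finset.mem_filter.1 hv).2
  · exact Finset.coe_subset.2 (Finset.filter_subset _ _)
  · have hv' := Finset.mem_filter.1 hv
    exact (hI hv'.1).resolve_left hv'.2
  · exact Finset.coe_subset.2 (Finset.filter_subset _ _)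

lemma insert (h : AlphaLEOn G S k) (v : V) : AlphaLEOn G (insert v S) (k + 1) := by
  rw [Set.insert_eq, Set.union_comm]
  refine h.union fun I hI _ => ?_
  exact Finset.card_le_card (t := {v}) (by exact_mod_cast hI)

lemma exists_of_not (h : ¬ AlphaLEOn G S k) :
    ∃ I : Finset V, ↑I ⊆ S ∧ G.IsIndepSet I ∧ #I = k := by
  simp only [AlphaLEOn, not_forall, not_le] at h
  obtain ⟨I, hIS, hI, hk⟩ := h
  obtain ⟨I', hI'I, hI'⟩ := Finset.exists_subset_card_eq hk.le
  have hsub : (I' : Set V) ⊆ I := Finset.coe_subset.2 hI'I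
  exact ⟨I', hsub.trans hIS, hI.mono hsub, hI'⟩

end AlphaLEOn

lemma exists_adj_of_maximal_isIndepSet {P : Set V} {A : Finset V}
    (hA : Maximal (fun A : Finset V => ↑A ⊆ P ∧ G.IsIndepSet A) A) {v : V} (hvP : v ∈ P)
    (hvA : v ∉ A) : ∃ a ∈ A, G.Adj v a := by
  classical
  by_contra! hv
  refine hvA (hA.le_of_ge (y := insert v A) ⟨?_, ?_⟩ (Finset.subset_insert v A)
    (Finset.mem_insert_self v A))
  · simpa [Set.insert_subset_iff, hvP] using hA.prop.1
  · rw [Finset.coe_insert]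
    exact isIndepSet_insert_iff.2 ⟨hA.prop.2, hv⟩

end Independence

section BicliqueFree

variable {V ι : Type*} {G : SimpleGraph V} {s t : ℕ}

lemma nonempty_completeBipartiteGraph_embedding {X Y : Finset V} (hX : G.IsIndepSet X)
    (hY : G.IsIndepSet Y) (hXY : ∀ x ∈ X, ∀ y ∈ Y, G.Adj x y) (hs : s ≤ #X) (ht : t ≤ #Y) :
    Nonempty (completeBipartiteGraph (Fin s) (Fin t) ↪g G) := by
  obtain ⟨f⟩ : Nonempty (Fin s ↪ X) := Function.Embedding.nonempty_of_card_le (by simpa)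
  obtain ⟨g⟩ : Nonempty (Fin t ↪ Y) := Function.Embedding.nonempty_of_card_le (by simpa)
  have hfg : ∀ i j, G.Adj (f i) (g j) := fun i j => hXY _ (f i).2 _ (g j).2
  refine ⟨⟨⟨Sum.elim (fun i => f i) (fun j => g j), ?_⟩, ?_⟩⟩
  · exact (Subtype.val_injective.comp f.injective).sumElim
      (Subtype.val_injective.comp g.injective) fun i j => (hfg i j).ne
  · rintro (i | i) (j | j)
    · simpa using not_adj_of_isIndepSet hX (f i).2 (f j).2
    · simpa using hfg i j
    · simpa using (hfg j i).symm
    · simpa using not_adj_of_isIndepSet hY (g i).2 (g j).2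

lemma card_filter_le_card_filter_adj_le [DecidableRel G.Adj]
    (hG : IsEmpty (completeBipartiteGraph (Fin s) (Fin t) ↪g G)) {X Y : Finset V}
    (hX : G.IsIndepSet X) (hY : G.IsIndepSet Y) :
    #{x ∈ X | t ≤ #{y ∈ Y | G.Adj x y}} ≤ s * 2 ^ #Y := by
  classical
  by_contra! hlt
  obtain ⟨Z, hZY, hZ⟩ := Finset.exists_lt_card_fiber_of_mul_lt_card_of_maps_to
    (s := {x ∈ X | t ≤ #{y ∈ Y | G.Adj x y}}) (t := Y.powerset) (n := s)
    (f := fun x => {y ∈ Y | G.Adj x y})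
    (fun x _ => Finset.mem_powerset.2 (Finset.filter_subset _ _))
    (by rwa [Finset.card_powerset, mul_comm])
  set X' := {x ∈ {x ∈ X | t ≤ #{y ∈ Y | G.Adj x y}} | {y ∈ Y | G.Adj x y} = Z}
  have hX' : ∀ x ∈ X', x ∈ X ∧ t ≤ #{y ∈ Y | G.Adj x y} ∧ {y ∈ Y | G.Adj x y} = Z :=
    fun x hx => by simpa [X', and_assoc] using hx
  obtain ⟨x, hx⟩ : X'.Nonempty := Finset.card_pos.1 (by omega)
  have htZ : t ≤ #Z := (hX' x hx).2.2 ▸ (hX' x hx).2.1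
  have hadj : ∀ x ∈ X', ∀ y ∈ Z, G.Adj x y := by
    intro x hx y hy
    rw [← (hX' x hx).2.2] at hy
    exact (Finset.mem_filter.1 hy).2
  exact not_isEmpty_iff.2 (nonempty_completeBipartiteGraph_embedding
    (hX.mono fun x hx => (hX' x hx).1) (hY.mono (Finset.mem_powerset.1 hZY)) hadj hZ.le htZ) hG

lemma exists_mem_forall_card_filter_adj_lt [DecidableRel G.Adj]
    (hG : IsEmpty (completeBipartiteGraph (Fin s) (Fin t) ↪g G)) {X : Finset V}
    (hX : G.IsIndepSet X) {I : Finset ι} {Y : ι → Finset V} (hY : ∀ i ∈ I, G.IsIndepSet (Y i))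
    {b : ℕ} (hb : ∀ i ∈ I, #(Y i) ≤ b) (hcard : #I * (s * 2 ^ b) < #X) :
    ∃ x ∈ X, ∀ i ∈ I, #{y ∈ Y i | G.Adj x y} < t := by
  have hbad : ∀ i ∈ I, #{x ∈ X | t ≤ #{y ∈ Y i | G.Adj x y}} ≤ s * 2 ^ b := fun i hi =>
    (card_filter_le_card_filter_adj_le hG hX (hY i hi)).trans
      (Nat.mul_le_mul_left s (Nat.pow_le_pow_right two_pos (hb i hi)))
  have hgood := card_le_card_filter_forall_not_add
    (fun i x => t ≤ #{y ∈ Y i | G.Adj x y}) hbad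
  have hpos : 0 < #{x ∈ X | ∀ i ∈ I, ¬ t ≤ #{y ∈ Y i | G.Adj x y}} := by linarith
  obtain ⟨x, hx⟩ := Finset.card_pos.1 hpos
  exact ⟨x, by simpa only [Finset.mem_filter, not_le] using hx⟩

/-- The size of `m` independent sets in a `K_{t,t}`-free graph that guarantees an independent
transversal. In the recursion, all sets but one are cut down to size `b`; then at most
`m * (t * 2 ^ b)` vertices of the remaining set have `t` neighbours in one of them, and discarding
the neighbours of any other vertex costs each of them fewer than `t` elements. -/
def transversalBound (t : ℕ) : ℕ → ℕ
  | 0 => 0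
  | m + 1 =>
    let b := transversalBound t m + t
    b + m * (t * 2 ^ b) + 1

theorem exists_isIndepSet_transversal [Nonempty V]
    (hG : IsEmpty (completeBipartiteGraph (Fin t) (Fin t) ↪g G)) {I : Finset ι}
    {J : ι → Finset V} (hJ : ∀ i ∈ I, G.IsIndepSet (J i))
    (hcard : ∀ i ∈ I, transversalBound t #I ≤ #(J i)) :
    ∃ f : ι → V, (∀ i ∈ I, f i ∈ J i) ∧ G.IsIndepSet (f '' I) := by
  classical
  induction I using Finset.induction_on generalizing J with
  | empty => exact ⟨fun _ => Classical.arbitrary V, by simp⟩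
  | insert i I hi ih =>
    set b := transversalBound t #I + t
    replace hcard : ∀ j ∈ insert i I, b + #I * (t * 2 ^ b) + 1 ≤ #(J j) := by
      simpa only [Finset.card_insert_of_notMem hi, transversalBound] using hcard
    rw [Finset.forall_mem_insert] at hJ hcard
    obtain ⟨hJi, hJI⟩ := hJ
    choose! J' hJ'J hJ'card using fun j (hj : j ∈ I) =>
      Finset.exists_subset_card_eq (show b ≤ #(J j) by have := hcard.2 j hj; omega)
    have hJ' : ∀ j ∈ I, G.IsIndepSet (J' j) := fun j hj => (hJI j hj).mono (hJ'J j hj)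
    obtain ⟨x, hxJ, hx⟩ := exists_mem_forall_card_filter_adj_lt hG hJi hJ'
      (fun j hj => (hJ'card j hj).le) (show _ < #(J i) by linarith [hcard.1])
    have hnonadj : ∀ j ∈ I, transversalBound t #I ≤ #{y ∈ J' j | ¬ G.Adj x y} := fun j hj => by
      have hsplit := Finset.card_filter_add_card_filter_not (s := J' j) (G.Adj x ·)
      have hfew := hx j hj
      have hsize := hJ'card j hj
      omega
    obtain ⟨f, hfJ, hf⟩ := ih (fun j hj => (hJ' j hj).mono (Finset.filter_subset _ _)) hnonadj
    replace hfJ : ∀ j ∈ I, f j ∈ J' j ∧ ¬ G.Adj x (f j) := fun j hj =>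
      Finset.mem_filter.1 (hfJ j hj)
    have hupdate : ∀ j ∈ I, Function.update f i x j = f j := fun j hj =>
      Function.update_of_ne (ne_of_mem_of_not_mem hj hi) x f
    refine ⟨Function.update f i x, ?_, ?_⟩
    · rw [Finset.forall_mem_insert, Function.update_self]
      exact ⟨hxJ, fun j hj => by rw [hupdate j hj]; exact hJ'J j hj (hfJ j hj).1⟩
    · rw [Finset.coe_insert, Set.image_insert_eq, Function.update_self,
        Set.image_congr (g := f) hupdate, isIndepSet_insert_iff]
      exact ⟨hf, Set.forall_mem_image.2 fun j hj => (hfJ j hj).2⟩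

end BicliqueFree

section InducedMatching

variable {V : Type*} {G : SimpleGraph V}

/-- The edges `a — w a` for `a ∈ K` form an induced matching. -/
structure IsIndMatchingOn (G : SimpleGraph V) (K : Finset V) (w : V → V) : Prop where
  left : G.IsIndepSet K
  right : G.IsIndepSet (w '' K)
  adj_iff : ∀ a ∈ K, ∀ b ∈ K, G.Adj a (w b) ↔ a = b

lemma exists_isIndMatchingOn_of_alphaLEOn {d n : ℕ} {J : Finset V} {w : V → V}
    (hJ : G.IsIndepSet J) (hwJ : G.IsIndepSet (w '' J)) (hadj : ∀ j ∈ J, G.Adj j (w j))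
    (hd : ∀ j ∈ J, AlphaLEOn G (G.neighborSet (w j)) d) (hn : n * (2 * d + 1) ≤ #J) :
    ∃ K ⊆ J, #K = n ∧ IsIndMatchingOn G K w := by
  classical
  have hdeg : ∀ j ∈ J, #{k ∈ J | G.Adj (w j) k} ≤ d := fun j hj =>
    hd j hj _ (fun k hk => (Finset.mem_filter.1 hk).2) (hJ.mono (Finset.filter_subset _ _))
  obtain ⟨K, hKJ, hK, hKw⟩ :=
    exists_subset_pairwise_not_of_card_out_le (fun j k => G.Adj (w j) k) hdeg hn
  refine ⟨K, hKJ, hK, hJ.mono hKJ, hwJ.mono (Set.image_mono hKJ), fun a ha b hb => ?_⟩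
  refine ⟨fun hab => by_contra fun hne => hKw hb ha (Ne.symm hne) hab.symm, ?_⟩
  rintro rfl
  exact hadj a (hKJ ha)

/-- The size of independent neighbourhoods from which `m` vertices of a `K_{t,t}`-free graph can be
matched: each of them keeps `transversalBound t m` of its neighbours after losing fewer than `t` to
each of the others. -/
def starBound (t m : ℕ) : ℕ :=
  transversalBound t m + m * t

lemma exists_isIndMatchingOn_of_card_filter_adj_le [DecidableRel G.Adj] {t : ℕ}
    (hG : IsEmpty (completeBipartiteGraph (Fin t) (Fin t) ↪g G)) {K : Finset V}
    (hK : G.IsIndepSet K) {J : V → Finset V} (hJ : ∀ a ∈ K, G.IsIndepSet (J a))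
    (hadj : ∀ a ∈ K, ∀ x ∈ J a, G.Adj a x) (hcard : ∀ a ∈ K, starBound t #K ≤ #(J a))
    (hfew : (K : Set V).Pairwise fun a b => #{y ∈ J a | G.Adj b y} ≤ t) :
    ∃ w : V → V, IsIndMatchingOn G K w := by
  classical
  rcases K.eq_empty_or_nonempty with rfl | ⟨a₀, -⟩
  · exact ⟨id, by simp, by simp, by simp⟩
  have : Nonempty V := ⟨a₀⟩
  let J' : V → Finset V := fun a => {y ∈ J a | ∀ b ∈ K.erase a, ¬ G.Adj b y}
  have hJ' : ∀ a ∈ K, transversalBound t #K ≤ #(J' a) := fun a ha => by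
    have hloss : #(J a) ≤ #(J' a) + #(K.erase a) * t :=
      card_le_card_filter_forall_not_add (fun b y => G.Adj b y) fun b hb =>
        hfew ha (Finset.mem_of_mem_erase hb) (Finset.ne_of_mem_erase hb).symm
    have herase : #(K.erase a) * t ≤ #K * t :=
      Nat.mul_le_mul_right t Finset.card_erase_le
    have hstar : transversalBound t #K + #K * t ≤ #(J a) := hcard a ha
    linarith
  obtain ⟨w, hwJ', hw⟩ := exists_isIndepSet_transversal hG
    (fun a ha => (hJ a ha).mono (Finset.filter_subset _ _)) hJ'
  replace hwJ' : ∀ a ∈ K, w a ∈ J a ∧ ∀ b ∈ K.erase a, ¬ G.Adj b (w a) := fun a ha =>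
    Finset.mem_filter.1 (hwJ' a ha)
  refine ⟨w, hK, hw, fun a ha b hb => ⟨fun hab => by_contra fun hne => ?_, ?_⟩⟩
  · exact (hwJ' b hb).2 a (Finset.mem_erase.2 ⟨hne, ha⟩) hab
  · rintro rfl
    exact hadj a ha _ (hwJ' a ha).1

theorem exists_isIndMatchingOn_of_not_alphaLEOn {t m : ℕ}
    (hG : IsEmpty (completeBipartiteGraph (Fin t) (Fin t) ↪g G)) {A : Finset V}
    (hA : G.IsIndepSet A) (hstar : ∀ a ∈ A, ¬ AlphaLEOn G (G.neighborSet a) (starBound t m))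
    (hm : m * (2 * (t * 2 ^ starBound t m) + 1) ≤ #A) :
    ∃ K ⊆ A, #K = m ∧ ∃ w : V → V, IsIndMatchingOn G K w := by
  classical
  choose! J hadj hJ hJcard using fun a ha => AlphaLEOn.exists_of_not (hstar a ha)
  have hdeg : ∀ a ∈ A, #{b ∈ A | t ≤ #{y ∈ J a | G.Adj b y}} ≤ t * 2 ^ starBound t m :=
    fun a ha => hJcard a ha ▸ card_filter_le_card_filter_adj_le hG hA (hJ a ha)
  obtain ⟨K, hKA, rfl, hfew⟩ := exists_subset_pairwise_not_of_card_out_le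
    (fun a b => t ≤ #{y ∈ J a | G.Adj b y}) hdeg hm
  exact ⟨K, hKA, rfl, exists_isIndMatchingOn_of_card_filter_adj_le hG (hA.mono hKA)
    (fun a ha => hJ a (hKA ha)) (fun a ha => hadj a (hKA ha))
    (fun a ha => (hJcard a (hKA ha)).ge) fun a ha b hb hab => (not_le.1 (hfew ha hb hab)).le⟩

end InducedMatching

section AttachLeaves

variable {ι κ : Type*} {T : SimpleGraph ι} {f : κ → ι}

/-- The graph `T` with a new leaf `inr k` attached to the vertex `f k` for every `k : κ`. -/
def attachLeaves (T : SimpleGraph ι) (f : κ → ι) : SimpleGraph (ι ⊕ κ) where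
  Adj
    | .inl x, .inl y => T.Adj x y
    | .inl x, .inr k => f k = x
    | .inr k, .inl x => f k = x
    | .inr _, .inr _ => False
  symm := ⟨by rintro (x | k) (y | l) h <;> first | exact T.adj_symm h | exact h⟩
  loopless := ⟨by rintro (x | k) h <;> first | exact T.irrefl h | exact h⟩

namespace attachLeaves

lemma adj_inl_inr (T : SimpleGraph ι) (f : κ → ι) (k : κ) :
    (attachLeaves T f).Adj (.inl (f k)) (.inr k) :=
  rfl

lemma induce_image_inl_connected {s : Set ι} (hs : (T.induce s).Connected) :
    ((attachLeaves T f).induce (Sum.inl '' s)).Connected := by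
  let φ : T.induce s →g (attachLeaves T f).induce (Sum.inl '' s) :=
    ⟨fun x => ⟨.inl x, Set.mem_image_of_mem _ x.2⟩, id⟩
  refine hs.map φ ?_
  rintro ⟨_, x, hx, rfl⟩
  exact ⟨⟨x, hx⟩, rfl⟩

lemma induce_insert_inr_connected {s : Set ι} (hs : (T.induce s).Connected) {k : κ}
    (hk : f k ∈ s) :
    ((attachLeaves T f).induce (insert (.inr k) (Sum.inl '' s))).Connected := by
  rw [Set.insert_eq]
  exact connected_induce_union .of_subsingleton (induce_image_inl_connected hs).preconnected
    (Set.mem_singleton _) (Set.mem_image_of_mem _ hk) (adj_inl_inr T f k).symm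

lemma connected (hT : T.Connected) : (attachLeaves T f).Connected := by
  obtain ⟨x₀⟩ := hT.nonempty
  let φ : T →g attachLeaves T f := ⟨Sum.inl, id⟩
  have hinl : ∀ x, (attachLeaves T f).Reachable (.inl x₀) (.inl x) := fun x =>
    (hT.preconnected x₀ x).map φ
  refine (connected_iff_exists_forall_reachable _).2 ⟨.inl x₀, ?_⟩
  rintro (x | k)
  · exact hinl x
  · exact (hinl (f k)).trans (adj_inl_inr T f k).reachable

lemma edgeSet_subset : (attachLeaves T f).edgeSet ⊆
    Sym2.map Sum.inl '' T.edgeSet ∪ Set.range fun k => s(.inl (f k), .inr k) := by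
  intro e
  induction e using Sym2.ind with
  | _ a b =>
    rcases a with x | k <;> rcases b with y | l
    · exact fun hxy : T.Adj x y => .inl ⟨s(x, y), hxy, rfl⟩
    · rintro (rfl : f l = x)
      exact .inr ⟨l, rfl⟩
    · rintro (rfl : f k = y)
      exact .inr ⟨k, Sym2.eq_swap⟩
    · exact False.elim

lemma isTree [Finite ι] [Finite κ] (hT : T.IsTree) : (attachLeaves T f).IsTree := by
  have hconn : (attachLeaves T f).Connected := connected hT.connected
  refine isTree_iff_connected_and_card.2
    ⟨hconn, le_antisymm ?_ hconn.card_vert_le_card_edgeSet_add_one⟩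
  have hT' : T.edgeSet.ncard + 1 = Nat.card ι := (isTree_iff_connected_and_card.1 hT).2
  have hinl : (Sym2.map (Sum.inl : ι → ι ⊕ κ) '' T.edgeSet).ncard ≤ T.edgeSet.ncard :=
    Set.ncard_image_le (Set.toFinite _)
  have hinr : (Set.range fun k => s((.inl (f k) : ι ⊕ κ), .inr k)).ncard ≤ Nat.card κ :=
    Finite.card_range_le _
  calc (attachLeaves T f).edgeSet.ncard + 1
      ≤ T.edgeSet.ncard + Nat.card κ + 1 := by
        gcongr
        exact (Set.ncard_le_ncard edgeSet_subset (Set.toFinite _)).trans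
          ((Set.ncard_union_le _ _).trans (add_le_add hinl hinr))
    _ = Nat.card (ι ⊕ κ) := by rw [Nat.card_sum, ← hT']; ring

end attachLeaves

end AttachLeaves

namespace TreeDecomp

variable {V : Type} {G : SimpleGraph V}

lemma MuLE.mono {td : TreeDecomp G} {μ ν : ℕ} (h : td.MuLE μ) (hμν : μ ≤ ν) : td.MuLE ν :=
  fun x n a b hab htouch => (h x n a b hab htouch).trans hμν

lemma MuLE.card_le {td : TreeDecomp G} {μ : ℕ} (h : td.MuLE μ) (x : td.ι) {K : Finset V}
    {w : V → V} (hw : IsIndMatchingOn G K w) (htouch : ∀ a ∈ K, a ∈ td.bag x ∨ w a ∈ td.bag x) :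
    #K ≤ μ := by
  let e : Fin #K ≃ K := K.equivFin.symm
  have he : ∀ i, (e i : V) ∈ K := fun i => (e i).2
  have hadj : ∀ i j, G.Adj (e i) (w (e j)) ↔ i = j := fun i j => by
    rw [hw.adj_iff _ (he i) _ (he j), Subtype.coe_inj, e.apply_eq_iff_eq]
  have hleft : ∀ i j, ¬ G.Adj (e i) (e j) := fun i j =>
    not_adj_of_isIndepSet hw.left (he i) (he j)
  have hright : ∀ i j, ¬ G.Adj (w (e i)) (w (e j)) := fun i j =>
    not_adj_of_isIndepSet hw.right (Set.mem_image_of_mem w (he i)) (Set.mem_image_of_mem w (he j))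
  have hself : ∀ i, G.Adj (e i) (w (e i)) := fun i => (hadj i i).2 rfl
  refine h x #K (fun i => e i) (fun i => w (e i)) ⟨hself, fun i j hij => ?_⟩
    fun i => htouch _ (he i)
  refine ⟨fun heq => hij (e.injective (Subtype.ext heq)),
    fun (heq : (e i : V) = w (e j)) => hleft j i (heq.symm ▸ hself j),
    fun (heq : w (e i) = e j) => hleft i j (heq ▸ hself i),
    fun (heq : w (e i) = w (e j)) => hij ((hadj i j).1 (heq ▸ hself i)),
    hleft i j, mt (hadj i j).1 hij, fun hji => hij ((hadj j i).1 hji.symm).symm, hright i j⟩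

lemma MuLE.alphaLEOn_of_not_alphaLEOn_neighborSet {td : TreeDecomp G} {μ t : ℕ} (h : td.MuLE μ)
    (hG : IsEmpty (completeBipartiteGraph (Fin t) (Fin t) ↪g G)) (x : td.ι) :
    AlphaLEOn G {v ∈ td.bag x | ¬ AlphaLEOn G (G.neighborSet v) (starBound t (μ + 1))}
      ((μ + 1) * (2 * (t * 2 ^ starBound t (μ + 1)) + 1)) := by
  intro A hAx hA
  by_contra! hcard
  obtain ⟨K, hKA, hK, w, hw⟩ :=
    exists_isIndMatchingOn_of_not_alphaLEOn hG hA (fun a ha => (hAx ha).2) hcard.le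
  have := h.card_le x hw fun a ha => .inl (hAx (hKA ha)).1
  omega

lemma MuLE.alphaLEOn_neighbors {td : TreeDecomp G} {μ d : ℕ} (h : td.MuLE μ) {A : Set V}
    (hA : G.IsIndepSet A) (hd : ∀ a ∈ A, AlphaLEOn G (G.neighborSet a) d) (x : td.ι) :
    AlphaLEOn G {v | ∃ a ∈ A, G.Adj v a ∧ (v ∈ td.bag x ∨ a ∈ td.bag x)}
      ((μ + 1) * (2 * d + 1)) := by
  intro I hIx hI
  by_contra! hcard
  choose! w hwA hadj htouch using hIx
  have hwI : w '' I ⊆ A := Set.image_subset_iff.2 hwA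
  obtain ⟨K, hKI, hK, hw⟩ := exists_isIndMatchingOn_of_alphaLEOn hI (hA.mono hwI)
    hadj (fun v hv => hd _ (hwA hv)) hcard.le
  have := h.card_le x hw fun v hv => htouch (hKI hv)
  omega

/-- The decomposition whose only bag is `V`. Without it the infimum in `treeMu` could be the junk
value `sInf ∅ = 0`. -/
def singleBag (G : SimpleGraph V) : TreeDecomp G where
  ι := Unit
  fintype_ι := inferInstance
  T := ⊥
  isTree := IsTree.of_subsingleton
  bag _ := Set.univ
  mem_bag _ := ⟨(), Set.mem_univ _⟩
  edge_bag _ _ _ := ⟨(), Set.mem_univ _, Set.mem_univ _⟩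
  bag_conn v :=
    have : Nonempty {_x : Unit | v ∈ Set.univ} := ⟨(), Set.mem_univ v⟩
    .of_subsingleton

lemma exists_muLE_treeMu [Finite V] (G : SimpleGraph V) :
    ∃ td : TreeDecomp G, td.MuLE (treeMu G) := by
  refine Nat.sInf_mem (s := {n | ∃ td : TreeDecomp G, td.MuLE n})
    ⟨Nat.card V, singleBag G, fun x n a b hab _ => ?_⟩
  have ha : Function.Injective a := fun i j hij => by_contra fun hne => (hab.2 i j hne).1 hij
  simpa using Nat.card_le_card_of_injective a ha

lemma AlphaLE.treeAlpha_le {td : TreeDecomp G} {k : ℕ} (h : td.AlphaLE k) : treeAlpha G ≤ k :=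
  Nat.sInf_le ⟨td, h⟩

/-- A chosen node of the decomposition whose bag contains `v`; the leaf of `v` in
`TreeDecomp.isolate` is attached there. -/
noncomputable def node (td : TreeDecomp G) (v : V) : td.ι :=
  (td.mem_bag v).choose

lemma mem_bag_node (td : TreeDecomp G) (v : V) : v ∈ td.bag (td.node v) :=
  (td.mem_bag v).choose_spec

/-- The bags of `TreeDecomp.isolate`: each `a ∈ A` is replaced in the old bags by its neighbours,
and the new leaf of `a` carries the closed neighbourhood of `a`. -/
def isolateBag (td : TreeDecomp G) (A : Finset V) : td.ι ⊕ A → Set V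
  | .inl x => {u | u ∉ A ∧ (u ∈ td.bag x ∨ ∃ a ∈ A, a ∈ td.bag x ∧ G.Adj u a)}
  | .inr a => insert ↑a (G.neighborSet a)

section isolate

variable (td : TreeDecomp G) {A : Finset V} {u : V}

lemma setOf_mem_isolateBag_of_mem (hA : G.IsIndepSet A) (hu : u ∈ A) :
    {z | u ∈ td.isolateBag A z} = {.inr ⟨u, hu⟩} := by
  ext (x | a)
  · simp [isolateBag, hu]
  · have hau : ¬ G.Adj a u := not_adj_of_isIndepSet hA a.2 hu
    simp [isolateBag, hau, Subtype.ext_iff, eq_comm]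

/-- The node set is a union of subtrees which all meet the subtree of `u`: for every neighbour `a`
of `u` in `A`, the subtree of `a` does, because some bag contains the edge `ua`. -/
lemma induce_isolateBag_connected_of_notMem (hu : u ∉ A) :
    ((attachLeaves td.T fun a : A => td.node a).induce {z | u ∈ td.isolateBag A z}).Connected := by
  let S : V → Set td.ι := fun v => {x | v ∈ td.bag x}
  have hinl : Sum.inl '' S u ⊆ {z | u ∈ td.isolateBag A z} :=
    Set.image_subset_iff.2 fun x hx => ⟨hu, .inl hx⟩
  have hpatch : ∀ a : A, G.Adj u a →
      insert (.inr a) (Sum.inl '' (S u ∪ S a)) ⊆ {z | u ∈ td.isolateBag A z} := by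
    refine fun a hua => Set.insert_subset (.inr hua.symm) (Set.image_subset_iff.2 ?_)
    exact Set.union_subset (fun x hx => ⟨hu, .inl hx⟩) fun x hx => ⟨hu, .inr ⟨a, a.2, hx, hua⟩⟩
  have hconn : ∀ a : A, G.Adj u a → ((attachLeaves td.T fun a : A => td.node a).induce
      (insert (.inr a) (Sum.inl '' (S u ∪ S a)))).Connected := fun a hua =>
    attachLeaves.induce_insert_inr_connected
      (induce_union_connected (td.bag_conn u).preconnected (td.bag_conn a).preconnected
        (td.edge_bag hua)) (.inr (td.mem_bag_node a))
  have hbase : (.inl (td.node u) : td.ι ⊕ A) ∈ Sum.inl '' S u :=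
    Set.mem_image_of_mem _ (td.mem_bag_node u)
  have hbase' : ∀ a : A, Sum.inl (td.node u) ∈ insert (.inr a) (Sum.inl '' (S u ∪ S a)) :=
    fun a => .inr (Set.image_mono Set.subset_union_left hbase)
  refine induce_connected_of_patches _ (hinl hbase) ?_
  rintro (x | a) hz
  · obtain hx | ⟨a, ha, hax, hua⟩ := hz.2
    · exact ⟨_, hinl, hbase, Set.mem_image_of_mem _ hx,
        (attachLeaves.induce_image_inl_connected (td.bag_conn u)).preconnected _ _⟩
    · exact ⟨_, hpatch ⟨a, ha⟩ hua, hbase' _, .inr (Set.mem_image_of_mem _ (.inr hax)),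
        (hconn ⟨a, ha⟩ hua).preconnected _ _⟩
  · obtain rfl | hua := hz
    · exact absurd a.2 hu
    · exact ⟨_, hpatch a hua.symm, hbase' a, Set.mem_insert _ _,
        (hconn a hua.symm).preconnected _ _⟩

/-- The decomposition obtained from `td` by replacing each vertex `a` of the independent set `A` by
its neighbours and attaching a leaf with bag `N[a]` to a node that contained `a`. -/
noncomputable def isolate (hA : G.IsIndepSet A) : TreeDecomp G where
  ι := td.ι ⊕ A
  fintype_ι := have := td.fintype_ι; inferInstance
  T := attachLeaves td.T fun a : A => td.node a
  isTree := have := td.fintype_ι; attachLeaves.isTree td.isTree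
  bag := td.isolateBag A
  mem_bag v := by
    by_cases hv : v ∈ A
    · exact ⟨.inr ⟨v, hv⟩, .inl rfl⟩
    · exact ⟨.inl (td.node v), hv, .inl (td.mem_bag_node v)⟩
  edge_bag u v huv := by
    by_cases hu : u ∈ A
    · exact ⟨.inr ⟨u, hu⟩, .inl rfl, .inr huv⟩
    by_cases hv : v ∈ A
    · exact ⟨.inr ⟨v, hv⟩, .inr huv.symm, .inl rfl⟩
    obtain ⟨x, hux, hvx⟩ := td.edge_bag huv
    exact ⟨.inl x, ⟨hu, .inl hux⟩, hv, .inl hvx⟩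
  bag_conn u := by
    by_cases hu : u ∈ A
    · rw [setOf_mem_isolateBag_of_mem td hA hu]
      have : Nonempty ({.inr ⟨u, hu⟩} : Set (td.ι ⊕ A)) := ⟨_, rfl⟩
      exact .of_subsingleton
    · exact induce_isolateBag_connected_of_notMem td hu

end isolate

theorem MuLE.exists_alphaLE [Finite V] {td : TreeDecomp G} {μ d n : ℕ} (h : td.MuLE μ)
    (hn : ∀ x, AlphaLEOn G {v ∈ td.bag x | ¬ AlphaLEOn G (G.neighborSet v) d} n) :
    ∃ td' : TreeDecomp G, td'.AlphaLE (max (n + (μ + 1) * (2 * d + 1)) (d + 1)) := by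
  let P : Set V := {v | AlphaLEOn G (G.neighborSet v) d}
  obtain ⟨A, -, hA⟩ := Finite.exists_le_maximal (a := ∅)
    (p := fun A : Finset V => ↑A ⊆ P ∧ G.IsIndepSet A) (by simp)
  refine ⟨td.isolate hA.prop.2, ?_⟩
  rintro (x | a)
  · refine ((hn x).union (h.alphaLEOn_neighbors hA.prop.2 hA.prop.1 x)).mono ?_ (le_max_left _ _)
    rintro v ⟨hvA, hvx | ⟨a, ha, hax, hva⟩⟩
    · by_cases hv : v ∈ P
      · obtain ⟨a, ha, hva⟩ := exists_adj_of_maximal_isIndepSet hA hv hvA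
        exact .inr ⟨a, ha, hva, .inl hvx⟩
      · exact .inl ⟨hvx, hv⟩
    · exact .inr ⟨a, ha, hva, .inr hax⟩
  · have ha : AlphaLEOn G (G.neighborSet a) d := hA.prop.1 a.2
    exact (ha.insert a).mono subset_rfl (le_max_right _ _)

end TreeDecomp

/-- For all positive integers `μ` and `t`, there is an integer `K` such that every finite
`K_{t,t}`-free graph `G` with induced matching treewidth at most `μ` has tree-independence
number strictly less than `K`. -/
theorem stmt0 (μ t : ℕ) (hμ : 0 < μ) (ht : 0 < t) :
    ∃ K : ℕ, ∀ (V : Type) [Fintype V] (G : SimpleGraph V),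
      IsEmpty (completeBipartiteGraph (Fin t) (Fin t) ↪g G) →
      treeMu G ≤ μ → treeAlpha G < K := by
  let d := starBound t (μ + 1)
  let n := (μ + 1) * (2 * (t * 2 ^ d) + 1)
  refine ⟨max (n + (μ + 1) * (2 * d + 1)) (d + 1) + 1, fun V _ G hG hGμ => Nat.lt_succ_of_le ?_⟩
  obtain ⟨td, htd⟩ := TreeDecomp.exists_muLE_treeMu G
  have htdμ : td.MuLE μ := htd.mono hGμ
  obtain ⟨td', htd'⟩ := htdμ.exists_alphaLE (htdμ.alphaLEOn_of_not_alphaLEOn_neighborSet hG)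
  exact htd'.treeAlpha_le
end

section
/- There exists a function f : ℕ × ℕ → ℕ such that every finite simple graph G with induced matching treewidth at most μ and clique number at most ω satisfies χ(G) ≤ f(μ, ω). In other words, every class of graphs with bounded induced matching treewidth is χ-bounded. -/
open SimpleGraph

/-!
Order the vertices of `G` by the topmost nodes of their subtrees in the rooted decomposition tree.
Edges then join comparable vertices, the vertices below any given one form a chain, and an induced
matching all of whose edges pass over a vertex has at most `μ` edges. The theorem is proved in this
order-theoretic setting by induction on `ω`.

The level of a vertex `v` is the maximum length of a sequence of edges below `v` in which each edge
avoids all neighbours of the vertices lying below the previous one. By Ramsey's theorem, boundedly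
many vertices below `x` dominate all neighbours above `x` of vertices below `x`, since otherwise
private neighbours yield a large induced matching; neighbourhoods have smaller clique number, so
every level can be coloured with boundedly many colours. Refining these colours by the level modulo
`μ² + 2` partitions `V` into boundedly many parts in which every edge rises by at least `μ² + 2`
levels. An induced matching of such edges spanning one innermost edge has at most `μ` of them, each
upper endpoint sees at most `μ` edges of the fresh chain inside the innermost edge, and so some edge
of the chain extends the matching in `G`. Each part thus has smaller nested matchings than `G`, and
`μ` rounds of partitioning leave independent sets.
-/

section Coloring

variable {V κ : Type*} {G : SimpleGraph V} {m n : ℕ}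

theorem exists_fin_coloring_within_fibers (f : V → κ)
    (hf : ∀ i, (G.induce (f ⁻¹' {i})).Colorable n) :
    ∃ c : V → Fin n, ∀ ⦃u v⦄, G.Adj u v → f u = f v → c u ≠ c v := by
  let C i := (hf i).some
  let c v := C (f v) ⟨v, Set.mem_singleton (f v)⟩
  have hc : ∀ {i} (v : f ⁻¹' {i}), c v = C i v := by
    rintro _ ⟨v, rfl⟩
    rfl
  refine ⟨c, fun u v huv hfuv => ?_⟩
  rw [hc ⟨u, hfuv⟩, hc ⟨v, Set.mem_singleton (f v)⟩]
  exact (C (f v)).valid huv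

theorem colorable_card_mul_of_fibers [Fintype κ] (f : V → κ)
    (hf : ∀ i, (G.induce (f ⁻¹' {i})).Colorable n) : G.Colorable (Fintype.card κ * n) := by
  obtain ⟨c, hc⟩ := exists_fin_coloring_within_fibers f hf
  have C : G.Coloring (κ × Fin n) := Coloring.mk (fun v => (f v, c v)) fun huv h =>
    hc huv (congrArg Prod.fst h) (congrArg Prod.snd h)
  simpa only [Fintype.card_prod, Fintype.card_fin] using C.colorable

theorem colorable_induce_of_subset {s t : Set V} (hst : s ⊆ t) (ht : (G.induce t).Colorable n) :
    (G.induce s).Colorable n :=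
  ht.of_hom (G.induceHomOfLE hst).toHom

theorem colorable_induce_union {s t : Set V} (hs : (G.induce s).Colorable m)
    (ht : (G.induce t).Colorable n) : (G.induce (s ∪ t)).Colorable (m + n) := by
  classical
  obtain ⟨C⟩ := hs
  obtain ⟨D⟩ := ht
  let c : ↥(s ∪ t) → Fin m ⊕ Fin n := fun v =>
    if h : v.1 ∈ s then .inl (C ⟨v, h⟩) else .inr (D ⟨v, v.2.resolve_left h⟩)
  have hc : ∀ {u v : ↥(s ∪ t)}, (G.induce (s ∪ t)).Adj u v → c u ≠ c v := by
    intro u v huv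
    by_cases hu : u.1 ∈ s <;> by_cases hv : v.1 ∈ s
    · simpa [c, hu, hv] using C.valid (v := ⟨u, hu⟩) (w := ⟨v, hv⟩) huv
    · simp [c, hu, hv]
    · simp [c, hu, hv]
    · simpa [c, hu, hv] using
        D.valid (v := ⟨u, u.2.resolve_left hu⟩) (w := ⟨v, v.2.resolve_left hv⟩) huv
  simpa only [Fintype.card_sum, Fintype.card_fin] using (Coloring.mk c hc).colorable

theorem colorable_card_mul_of_forall_exists_mem {R : Finset κ} {N : κ → Set V}
    (hcover : ∀ v, ∃ r ∈ R, v ∈ N r) (hN : ∀ r ∈ R, (G.induce (N r)).Colorable n) :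
    G.Colorable (R.card * n) := by
  choose f hfR hf using hcover
  simpa only [Fintype.card_coe] using colorable_card_mul_of_fibers (fun v => (⟨f v, hfR v⟩ : R))
    fun r => colorable_induce_of_subset
      (by rintro v rfl; exact hf v) (hN r r.2)

theorem exists_partition_far_levels {α : Type*} (ℓ : V → ℕ) {q : ℕ} (hq : 0 < q) {c : V → α}
    (hc : ∀ ⦃u v⦄, G.Adj u v → ℓ u = ℓ v → c u ≠ c v) :
    ∃ f : V → Fin q × α, ∀ ⦃u v⦄, G.Adj u v → f u = f v → ℓ u ≤ ℓ v → ℓ u + q ≤ ℓ v := by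
  refine ⟨fun v => (⟨ℓ v % q, Nat.mod_lt _ hq⟩, c v), fun u v huv hf hle => ?_⟩
  obtain ⟨hmod, hcuv⟩ := Prod.ext_iff.1 hf
  have hne : ℓ u ≠ ℓ v := fun h => hc huv h hcuv
  exact Nat.ModEq.add_le_of_lt (Fin.ext_iff.1 hmod) (hle.lt_of_ne hne)

end Coloring

theorem exists_isNClique_or_isNIndepSet {V : Type*} (G : SimpleGraph V) {s t : ℕ} {A : Finset V}
    (hA : 2 ^ (s + t) ≤ A.card) :
    (∃ K ⊆ A, G.IsNClique s K) ∨ ∃ I ⊆ A, G.IsNIndepSet t I := by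
  classical
  simp only [← isNClique_compl]
  induction hn : s + t generalizing s t A with
  | zero => exact .inl ⟨∅, A.empty_subset, by simp [show s = 0 by lia]⟩
  | succ n ih =>
    rcases s with _ | s
    · exact .inl ⟨∅, A.empty_subset, by simp⟩
    rcases t with _ | t
    · exact .inr ⟨∅, A.empty_subset, by simp⟩
    obtain ⟨v, hv⟩ : A.Nonempty := Finset.card_pos.1 ((pow_pos two_pos _).trans_le hA)
    set B := {w ∈ A.erase v | G.Adj v w}
    set C := {w ∈ A.erase v | ¬ G.Adj v w}
    have hBA : insert v B ⊆ A := by grind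
    have hCA : insert v C ⊆ A := by grind
    have hvB : ∀ w ∈ B, G.Adj v w := by grind
    have hvC : ∀ w ∈ C, Gᶜ.Adj v w := by
      intro w hw
      rw [compl_adj]
      grind
    have hBC : B.card + C.card = A.card - 1 := by
      rw [Finset.card_filter_add_card_filter_not, Finset.card_erase_of_mem hv]
    have hpow : 2 ^ (s + 1 + (t + 1)) = 2 * 2 ^ n := by rw [hn, pow_succ']
    have hlarge : 2 ^ n ≤ B.card ∨ 2 ^ n ≤ C.card := by lia
    rcases hlarge with hB | hC
    · rcases ih (s := s) (t := t + 1) (A := B) (by convert hB; lia) (by lia) with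
        ⟨K, hK, hKc⟩ | ⟨I, hI, hIc⟩
      · exact .inl ⟨insert v K, (Finset.insert_subset_insert v hK).trans hBA,
          hKc.insert fun w hw => hvB w (hK hw)⟩
      · exact .inr ⟨I, hI.trans ((Finset.subset_insert v B).trans hBA), hIc⟩
    · rcases ih (s := s + 1) (t := t) (A := C) (by convert hC; lia) (by lia) with
        ⟨K, hK, hKc⟩ | ⟨I, hI, hIc⟩
      · exact .inl ⟨K, hK.trans ((Finset.subset_insert v C).trans hCA), hKc⟩
      · exact .inr ⟨insert v I, (Finset.insert_subset_insert v hI).trans hCA,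
          hIc.insert fun w hw => hvC w (hI hw)⟩

theorem exists_dominating_subset_with_private {α β : Type*} {r : α → β → Prop} {A : Finset α}
    {S : Set β} (hA : ∀ v ∈ S, ∃ u ∈ A, r u v) :
    ∃ R ⊆ A, (∀ v ∈ S, ∃ u ∈ R, r u v) ∧ ∀ u ∈ R, ∃ v ∈ S, ∀ u' ∈ R, r u' v ↔ u' = u := by
  classical
  obtain ⟨R, hRA, hR, hmin⟩ := exists_minimal_le_of_wellFoundedLT
    (fun R : Finset α => ∀ v ∈ S, ∃ u ∈ R, r u v) A hA
  refine ⟨R, hRA, hR, fun u hu => ?_⟩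
  by_contra! hprivate
  have herase : ∀ v ∈ S, ∃ w ∈ R.erase u, r w v := by
    intro v hv
    obtain ⟨w, hw, hwv⟩ := hR v hv
    obtain ⟨u', hu', hiff⟩ := hprivate v hv
    grind
  exact Finset.notMem_erase u R (hmin herase (R.erase_subset u) hu)

section IndMatching

variable {V : Type} {G : SimpleGraph V} {n : ℕ}

theorem isIndMatching_iff {a b : Fin n → V} :
    IsIndMatching G a b ↔ (∀ i j, G.Adj (a i) (b j) ↔ i = j) ∧
      (∀ i j, ¬ G.Adj (a i) (a j)) ∧ ∀ i j, ¬ G.Adj (b i) (b j) := by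
  constructor
  · rintro ⟨hadj, h⟩
    refine ⟨fun i j => ⟨fun hij => ?_, ?_⟩, fun i j hij => ?_, fun i j hij => ?_⟩
    · by_contra hne
      exact (h i j hne).2.2.2.2.2.1 hij
    · rintro rfl
      exact hadj i
    · exact (h i j (by rintro rfl; exact hij.ne rfl)).2.2.2.2.1 hij
    · exact (h i j (by rintro rfl; exact hij.ne rfl)).2.2.2.2.2.2.2 hij
  · rintro ⟨hab, ha, hb⟩
    have hadj : ∀ i, G.Adj (a i) (b i) := fun i => (hab i i).2 rfl
    refine ⟨hadj, fun i j hij => ⟨?_, ?_, ?_, ?_, ha i j, mt (hab i j).1 hij,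
      fun h => hij ((hab j i).1 h.symm).symm, hb i j⟩⟩ <;> intro h
    · exact hij ((hab i j).1 (h ▸ hadj j))
    · exact ha j i (h ▸ hadj j)
    · exact ha i j (h ▸ hadj i)
    · exact hij ((hab i j).1 (h ▸ hadj i))

theorem IsIndMatching.injective_left {a b : Fin n → V} (h : IsIndMatching G a b) :
    Function.Injective a := fun i j hij => by
  by_contra hne
  exact (h.2 i j hne).1 hij

theorem IsIndMatching.of_induce {s : Set V} {a b : Fin n → s}
    (h : IsIndMatching (G.induce s) a b) :
    IsIndMatching G (fun i => (a i : V)) (fun i => (b i : V)) := by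
  rw [isIndMatching_iff] at h ⊢
  exact h

theorem IsIndMatching.cons {a b : Fin n → V} (h : IsIndMatching G a b) {x y : V}
    (hxy : G.Adj x y) (hx : ∀ i, ¬ G.Adj (a i) x ∧ ¬ G.Adj (b i) x)
    (hy : ∀ i, ¬ G.Adj (a i) y ∧ ¬ G.Adj (b i) y) :
    IsIndMatching G (Fin.cons x a : Fin (n + 1) → V) (Fin.cons y b : Fin (n + 1) → V) := by
  rw [isIndMatching_iff] at h ⊢
  simp only [Fin.forall_fin_succ, Fin.cons_zero, Fin.cons_succ, Fin.succ_inj, h, hxy, hx, hy,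
    G.adj_comm x, G.adj_comm y, SimpleGraph.irrefl, (Fin.succ_ne_zero _).symm, Fin.succ_ne_zero,
    not_false_eq_true, implies_true, and_self]

/-- The number of vertices with private neighbours that forces, by two applications of Ramsey's
theorem, an induced matching of size `t` in a graph without a clique on `s` vertices. -/
def privateNeighborBound (s t : ℕ) : ℕ := 2 ^ (s + 2 ^ (s + t))

theorem exists_isIndMatching_of_private {R : Finset V} {b : V → V} {s t : ℕ}
    (hG : G.CliqueFree s) (hR : privateNeighborBound s t ≤ R.card)
    (hb : ∀ r ∈ R, ∀ r' ∈ R, G.Adj r' (b r) ↔ r' = r) :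
    ∃ a : Fin t → V, (∀ i, a i ∈ R) ∧ IsIndMatching G a (fun i => b (a i)) := by
  classical
  obtain ⟨I, hIR, hI⟩ := (exists_isNClique_or_isNIndepSet G hR).resolve_left
    fun ⟨K, _, hK⟩ => hG K hK
  have hbI : Set.InjOn b I := fun u hu v hv huv =>
    (hb v (hIR hv) u (hIR hu)).1 (huv ▸ (hb u (hIR hu) u (hIR hu)).2 rfl)
  obtain ⟨J, hJI, hJ⟩ := (exists_isNClique_or_isNIndepSet (G.comap b) hI.card_eq.ge).resolve_left
    fun ⟨K, hKI, hK⟩ => hG (K.image b) ⟨by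
        rw [Finset.coe_image, IsClique, (hbI.mono hKI).pairwise_image]
        exact hK.isClique,
      by rw [Finset.card_image_of_injOn (hbI.mono hKI), hK.card_eq]⟩
  let e := J.equivFinOfCardEq hJ.card_eq
  have heJ : ∀ i, (e.symm i : V) ∈ J := fun i => (e.symm i).2
  have heR : ∀ i, (e.symm i : V) ∈ R := fun i => hIR (hJI (heJ i))
  refine ⟨fun i => e.symm i, heR, isIndMatching_iff.2
    ⟨fun i j => ?_, fun i j hij => ?_, fun i j hij => ?_⟩⟩
  · rw [hb _ (heR j) _ (heR i), Subtype.coe_inj, e.symm.injective.eq_iff]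
  · exact hI.isIndepSet (hJI (heJ i)) (hJI (heJ j)) hij.ne hij
  · exact hJ.isIndepSet (heJ i) (heJ j) (fun h => hij.ne (congrArg b h)) hij

end IndMatching

section ForestModel

variable {V : Type} [PartialOrder V] {G : SimpleGraph V} {μ n : ℕ}

/-- The vertices `a ≤ x` with a neighbour `w ≥ x`. For the order coming from a rooted tree
decomposition these lie in the topmost bag containing `x`. -/
def crossing (G : SimpleGraph V) (x : V) : Set V :=
  {a | a ≤ x ∧ ∃ w, x ≤ w ∧ G.Adj a w}

/-- An order-theoretic substitute for a rooted tree decomposition `(T, β)` with `μ(T, β) ≤ μ`: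
the order is a forest growing upwards from its roots, edges join comparable vertices, and the sets
`crossing G x` play the role of the bags. -/
structure IsForestModel (G : SimpleGraph V) (μ : ℕ) : Prop where
  le_total_of_le : ∀ ⦃u v w : V⦄, u ≤ w → v ≤ w → u ≤ v ∨ v ≤ u
  le_total_of_adj : ∀ ⦃u v : V⦄, G.Adj u v → u ≤ v ∨ v ≤ u
  card_le : ∀ (x : V) (n : ℕ) (a b : Fin n → V), IsIndMatching G a b →
    (∀ i, a i ∈ crossing G x ∨ b i ∈ crossing G x) → n ≤ μ

theorem IsForestModel.induce (hG : IsForestModel G μ) (s : Set V) :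
    IsForestModel (G.induce s) μ where
  le_total_of_le _ _ _ huw hvw := hG.le_total_of_le huw hvw
  le_total_of_adj _ _ huv := hG.le_total_of_adj huv
  card_le x n a b hab htouch := by
    have hcross : ∀ u : s, u ∈ crossing (G.induce s) x → (u : V) ∈ crossing G x :=
      fun u ⟨hux, w, hxw, huw⟩ => ⟨hux, w, hxw, huw⟩
    exact hG.card_le x n _ _ hab.of_induce fun i => (htouch i).imp (hcross _) (hcross _)

theorem IsForestModel.colorable_one (hG : IsForestModel G μ)
    (hlt : ∀ u v, u < v → ¬ G.Adj u v) : G.Colorable 1 :=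
  ⟨Coloring.mk (fun _ => 0) fun {u v} huv => ((hG.le_total_of_adj huv).elim
    (fun h => hlt u v (h.lt_of_ne huv.ne) huv)
    (fun h => hlt v u (h.lt_of_ne huv.symm.ne) huv.symm)).elim⟩

/-- `c` colours suffice for every finite graph with a forest model of width `μ` and no clique on
more than `ω` vertices. -/
def IsChiBound (μ ω c : ℕ) : Prop :=
  ∀ (V : Type) [PartialOrder V] [Finite V] (G : SimpleGraph V),
    IsForestModel G μ → G.CliqueFree (ω + 1) → G.Colorable c

/-- The neighbours above `x` of the vertices at or below `x`. -/
def upperNeighbors (G : SimpleGraph V) (x : V) : Set V :=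
  {v | x < v ∧ ∃ u ≤ x, G.Adj u v}

theorem colorable_induce_upperNeighbors [Finite V] {ω c : ℕ} (hG : IsForestModel G μ)
    (hω : G.CliqueFree (ω + 2)) (hc : IsChiBound μ ω c) (x : V) :
    (G.induce (upperNeighbors G x)).Colorable
      (privateNeighborBound (ω + 2) (μ + 1) * c) := by
  obtain ⟨R, hRx, hRS, hprivate⟩ := exists_dominating_subset_with_private (r := G.Adj)
    (S := upperNeighbors G x) (A := (Set.toFinite (Set.Iic x)).toFinset) (by simp [upperNeighbors])
  replace hRx : ∀ r ∈ R, r ≤ x := fun r hr => by simpa using hRx hr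
  choose! b hbS hb using hprivate
  have hR : R.card ≤ privateNeighborBound (ω + 2) (μ + 1) := by
    by_contra! hlt
    obtain ⟨a, haR, hab⟩ := exists_isIndMatching_of_private hω hlt.le hb
    have hcross : ∀ i, a i ∈ crossing G x := fun i =>
      ⟨hRx _ (haR i), b (a i), (hbS _ (haR i)).1.le, hab.1 i⟩
    exact (hG.card_le x (μ + 1) _ _ hab fun i => .inl (hcross i)).not_gt μ.lt_succ_self
  have hneighbors : ∀ r, (G.induce (G.neighborSet r)).Colorable c := fun r =>
    hc _ _ (hG.induce _) ((cliqueFree_induce_iff ..).2 (by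
      simpa using CliqueFreeOn.of_succ G hω.cliqueFreeOn (Set.mem_univ r)))
  refine Colorable.mono (Nat.mul_le_mul_right c hR)
    (colorable_card_mul_of_forall_exists_mem (N := fun r => {v | G.Adj r v})
      (fun v => hRS v v.2) fun r _ => ?_)
  exact (hneighbors r).of_hom ⟨fun v => ⟨v.1, v.2⟩, id⟩

end ForestModel

section Level

variable {V : Type} [PartialOrder V] {G : SimpleGraph V} {μ m n : ℕ}

/-- An increasing sequence of edges `a i — b i` in which every edge is anticomplete to all the
vertices at or below the top `b i` of an earlier one. -/
structure IsFreshChain (G : SimpleGraph V) (a b : Fin n → V) : Prop where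
  adj : ∀ i, G.Adj (a i) (b i)
  lt : ∀ i, a i < b i
  lt_of_lt : ∀ ⦃i j⦄, i < j → b i < a j
  not_adj : ∀ ⦃i j⦄, i < j → ∀ u ≤ b i, ¬ G.Adj u (a j) ∧ ¬ G.Adj u (b j)

namespace IsFreshChain

variable {a b : Fin n → V}

theorem strictMono_right (h : IsFreshChain G a b) : StrictMono b := fun _ j hij =>
  (h.lt_of_lt hij).trans (h.lt j)

theorem comp (h : IsFreshChain G a b) {e : Fin m → Fin n} (he : StrictMono e) :
    IsFreshChain G (a ∘ e) (b ∘ e) where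
  adj i := h.adj (e i)
  lt i := h.lt (e i)
  lt_of_lt _ _ hij := h.lt_of_lt (he hij)
  not_adj _ _ hij := h.not_adj (he hij)

theorem isIndMatching (h : IsFreshChain G a b) : IsIndMatching G a b := by
  have hlt : ∀ ⦃i j⦄, i < j → ¬ G.Adj (a i) (a j) ∧ ¬ G.Adj (a i) (b j) ∧
      ¬ G.Adj (b i) (a j) ∧ ¬ G.Adj (b i) (b j) := fun i j hij =>
    have ha := h.not_adj hij _ (h.lt i).le
    have hb := h.not_adj hij _ le_rfl
    ⟨ha.1, ha.2, hb.1, hb.2⟩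
  refine isIndMatching_iff.2 ⟨fun i j => ⟨fun hij => ?_, ?_⟩, fun i j hij => ?_, fun i j hij => ?_⟩
  · rcases lt_trichotomy i j with hlt' | heq | hgt
    · exact absurd hij (hlt hlt').2.1
    · exact heq
    · exact absurd hij.symm (hlt hgt).2.2.1
  · rintro rfl
    exact h.adj i
  · rcases lt_trichotomy i j with hlt' | rfl | hgt
    · exact (hlt hlt').1 hij
    · exact hij.ne rfl
    · exact (hlt hgt).1 hij.symm
  · rcases lt_trichotomy i j with hlt' | rfl | hgt
    · exact (hlt hlt').2.2.2 hij
    · exact hij.ne rfl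
    · exact (hlt hgt).2.2.2 hij.symm

theorem snoc (h : IsFreshChain G a b) {x u v : V} (hbx : ∀ i, b i ≤ x) (hxu : x < u)
    (huv : u < v) (hadj : G.Adj u v) (hfresh : ∀ w ≤ x, ¬ G.Adj w u ∧ ¬ G.Adj w v) :
    IsFreshChain G (Fin.snoc a u : Fin (n + 1) → V) (Fin.snoc b v : Fin (n + 1) → V) where
  adj i := by
    induction i using Fin.lastCases with
    | last => simpa using hadj
    | cast i => simpa using h.adj i
  lt i := by
    induction i using Fin.lastCases with
    | last => simpa using huv
    | cast i => simpa using h.lt i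
  lt_of_lt i j hij := by
    induction i using Fin.lastCases with
    | last => exact absurd hij (Fin.le_last j).not_gt
    | cast i =>
      induction j using Fin.lastCases with
      | last => simpa using (hbx i).trans_lt hxu
      | cast j => simpa using h.lt_of_lt (Fin.castSucc_lt_castSucc_iff.1 hij)
  not_adj i j hij w hw := by
    induction i using Fin.lastCases with
    | last => exact absurd hij (Fin.le_last j).not_gt
    | cast i =>
      rw [Fin.snoc_castSucc] at hw
      induction j using Fin.lastCases with
      | last => simpa using hfresh w (hw.trans (hbx i))
      | cast j => simpa using h.not_adj (Fin.castSucc_lt_castSucc_iff.1 hij) w hw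

end IsFreshChain

/-- The maximum length of a fresh chain at or below `v`. -/
noncomputable def level (G : SimpleGraph V) (v : V) : ℕ :=
  sSup {n | ∃ a b : Fin n → V, IsFreshChain G a b ∧ ∀ i, b i ≤ v}

theorem isLeast_level_eq_of_le {u v x y : V} (huv : u ≤ v) (hlevel : level G u = level G v)
    (hx : IsLeast {w | w ≤ u ∧ level G w = level G u} x)
    (hy : IsLeast {w | w ≤ v ∧ level G w = level G v} y) : x = y := by
  have hyu : y ≤ u := hy.2 ⟨huv, hlevel⟩
  exact le_antisymm (hx.2 ⟨hyu, hy.1.2.trans hlevel.symm⟩)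
    (hy.2 ⟨hx.1.1.trans huv, hx.1.2.trans hlevel⟩)

variable [Finite V]

theorem bddAbove_freshChain_lengths (G : SimpleGraph V) (v : V) :
    BddAbove {n | ∃ a b : Fin n → V, IsFreshChain G a b ∧ ∀ i, b i ≤ v} := by
  refine ⟨Nat.card V, fun n ⟨a, b, h, _⟩ => ?_⟩
  simpa using Nat.card_le_card_of_injective b h.strictMono_right.injective

theorem IsFreshChain.le_level {a b : Fin n → V} (h : IsFreshChain G a b) {v : V}
    (hv : ∀ i, b i ≤ v) : n ≤ level G v :=
  le_csSup (bddAbove_freshChain_lengths G v) ⟨a, b, h, hv⟩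

theorem exists_isFreshChain_level (G : SimpleGraph V) (v : V) :
    ∃ a b : Fin (level G v) → V, IsFreshChain G a b ∧ ∀ i, b i ≤ v :=
  Nat.sSup_mem (s := {n | ∃ a b : Fin n → V, IsFreshChain G a b ∧ ∀ i, b i ≤ v})
    ⟨0, Fin.elim0, Fin.elim0, by constructor <;> exact fun i => i.elim0, fun i => i.elim0⟩
    (bddAbove_freshChain_lengths G v)

theorem level_mono (G : SimpleGraph V) : Monotone (level G) := fun u v huv => by
  obtain ⟨a, b, h, hu⟩ := exists_isFreshChain_level G u
  exact h.le_level fun i => (hu i).trans huv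

theorem level_lt_of_fresh_edge {x u v : V} (hxu : x < u) (huv : u < v) (hadj : G.Adj u v)
    (hfresh : ∀ w ≤ x, ¬ G.Adj w u ∧ ¬ G.Adj w v) : level G x < level G v := by
  obtain ⟨a, b, h, hx⟩ := exists_isFreshChain_level G x
  refine (h.snoc hx hxu huv hadj hfresh).le_level fun i => ?_
  induction i using Fin.lastCases with
  | last => simp
  | cast i => simpa using (hx i).trans (hxu.trans huv).le

theorem exists_isFreshChain_between (hG : IsForestModel G μ) {u v : V} (huv : u ≤ v)
    (hlevel : level G u + n < level G v) :
    ∃ a b : Fin n → V, IsFreshChain G a b ∧ (∀ i, u < a i) ∧ (∀ i, b i ≤ v) ∧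
      ∀ i, ∀ w ≤ u, ¬ G.Adj w (a i) ∧ ¬ G.Adj w (b i) := by
  obtain ⟨a, b, h, hv⟩ := exists_isFreshChain_level G v
  let k : Fin (level G v) := ⟨level G u, by lia⟩
  have hk : ¬ b k ≤ u := fun hku => by
    have hprefix := h.comp (Fin.strictMono_castLE (show level G u + 1 ≤ level G v by lia))
    refine (hprefix.le_level fun i => ?_).not_gt (level G u).lt_succ_self
    exact (h.strictMono_right.monotone (Nat.lt_succ_iff.1 i.2)).trans hku
  have huk : u ≤ b k := (hG.le_total_of_le huv (hv k)).resolve_right hk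
  let e : Fin n → Fin (level G v) := fun i => ⟨level G u + 1 + i, by lia⟩
  have he : StrictMono e := fun i j hij => Fin.lt_def.2 (by dsimp only [e]; lia)
  have hke : ∀ i, k < e i := fun i => Fin.lt_def.2 (by dsimp only [e, k]; lia)
  exact ⟨a ∘ e, b ∘ e, h.comp he, fun i => huk.trans_lt (h.lt_of_lt (hke i)), fun i => hv (e i),
    fun i w hw => h.not_adj (hke i) w (hw.trans huk)⟩

theorem exists_isLeast_level (hG : IsForestModel G μ) (v : V) :
    ∃ x, IsLeast {w | w ≤ v ∧ level G w = level G v} x := by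
  obtain ⟨x, hx, hmin⟩ := exists_minimal_of_wellFoundedLT
    (fun w => w ≤ v ∧ level G w = level G v) ⟨v, le_rfl, rfl⟩
  exact ⟨x, hx, fun w hw => (hG.le_total_of_le hx.1 hw.1).elim id (hmin hw)⟩

theorem colorable_induce_isLeast_level {ω c : ℕ} (hG : IsForestModel G μ)
    (hω : G.CliqueFree (ω + 2)) (hc : IsChiBound μ ω c) (x : V) :
    (G.induce {v | IsLeast {w | w ≤ v ∧ level G w = level G v} x}).Colorable
      (privateNeighborBound (ω + 2) (μ + 1) * c + 1) := by
  let I : Set V := {v | level G x = level G v ∧ (v = x ∨ x < v ∧ ∀ u ≤ x, ¬ G.Adj u v)}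
  have hI_lt : ∀ u ∈ I, ∀ v ∈ I, u < v → ¬ G.Adj u v := by
    rintro u ⟨hlu, hu⟩ v ⟨hlv, hv⟩ huv hadj
    rcases hu with rfl | ⟨hxu, hu⟩ <;> rcases hv with rfl | ⟨-, hv⟩
    · exact huv.false
    · exact hv u le_rfl hadj
    · exact (huv.trans hxu).false
    · exact (level_lt_of_fresh_edge hxu huv hadj fun w hw => ⟨hu w hw, hv w hw⟩).ne hlv
  have hI : (G.induce I).Colorable 1 :=
    (hG.induce I).colorable_one fun u v => hI_lt u u.2 v v.2
  refine colorable_induce_of_subset (fun v hv => ?_)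
    (colorable_induce_union (colorable_induce_upperNeighbors hG hω hc x) hI)
  obtain ⟨hxv, hlevel⟩ := hv.1
  rcases hxv.eq_or_lt with rfl | hlt
  · exact .inr ⟨rfl, .inl rfl⟩
  · by_cases hU : ∃ u ≤ x, G.Adj u v
    · exact .inl ⟨hlt, hU⟩
    · exact .inr ⟨hlevel, .inr ⟨hlt, by simpa using hU⟩⟩

theorem exists_coloring_within_levels {ω c : ℕ} (hG : IsForestModel G μ)
    (hω : G.CliqueFree (ω + 2)) (hc : IsChiBound μ ω c) :
    ∃ f : V → Fin (privateNeighborBound (ω + 2) (μ + 1) * c + 1),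
      ∀ ⦃u v⦄, G.Adj u v → level G u = level G v → f u ≠ f v := by
  choose root hroot using exists_isLeast_level hG
  have hroot_eq : ∀ ⦃u v⦄, G.Adj u v → level G u = level G v → root u = root v :=
    fun u v huv hlevel => (hG.le_total_of_adj huv).elim
      (fun h => isLeast_level_eq_of_le h hlevel (hroot u) (hroot v))
      (fun h => (isLeast_level_eq_of_le h hlevel.symm (hroot v) (hroot u)).symm)
  obtain ⟨f, hf⟩ := exists_fin_coloring_within_fibers root fun x =>
    colorable_induce_of_subset (by rintro v rfl; exact hroot v)
      (colorable_induce_isLeast_level hG hω hc x)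
  exact ⟨f, fun u v huv hlevel => hf huv (hroot_eq huv hlevel)⟩

end Level

section NestedMatching

variable {V : Type} [PartialOrder V] {G : SimpleGraph V} {μ n : ℕ}

/-- An induced matching whose edges `a i — b i` all span the edge `a 0 — b 0`. -/
structure IsNestedMatching (G : SimpleGraph V) (a b : Fin (n + 1) → V) : Prop where
  isIndMatching : IsIndMatching G a b
  left_le : ∀ i, a i ≤ a 0
  lt : a 0 < b 0
  le_right : ∀ i, b 0 ≤ b i

namespace IsNestedMatching

variable {a b : Fin (n + 1) → V}

theorem succ_le (h : IsNestedMatching G a b) (hG : IsForestModel G μ) : n + 1 ≤ μ :=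
  hG.card_le (a 0) (n + 1) a b h.isIndMatching fun i =>
    .inl ⟨h.left_le i, b i, h.lt.le.trans (h.le_right i), h.isIndMatching.1 i⟩

theorem of_induce {s : Set V} {a b : Fin (n + 1) → s} (h : IsNestedMatching (G.induce s) a b) :
    IsNestedMatching G (fun i => (a i : V)) (fun i => (b i : V)) where
  isIndMatching := h.isIndMatching.of_induce
  left_le := h.left_le
  lt := h.lt
  le_right := h.le_right

theorem cons (h : IsNestedMatching G a b) {x y : V} (hx : a 0 < x) (hxy : x < y) (hy : y ≤ b 0)
    (hadj : G.Adj x y) (ha : ∀ w ≤ a 0, ¬ G.Adj w x ∧ ¬ G.Adj w y)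
    (hb : ∀ i, ¬ G.Adj (b i) x ∧ ¬ G.Adj (b i) y) :
    IsNestedMatching G (Fin.cons x a : Fin (n + 2) → V) (Fin.cons y b : Fin (n + 2) → V) where
  isIndMatching := h.isIndMatching.cons hadj (fun i => ⟨(ha _ (h.left_le i)).1, (hb i).1⟩)
    fun i => ⟨(ha _ (h.left_le i)).2, (hb i).2⟩
  left_le := by simpa [Fin.forall_fin_succ] using
    ⟨hx.le, fun i : Fin n => (h.left_le i.succ).trans hx.le⟩
  lt := hxy
  le_right := by simpa [Fin.forall_fin_succ] using
    ⟨hy, fun i : Fin n => hy.trans (h.le_right i.succ)⟩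

end IsNestedMatching

theorem IsFreshChain.exists_not_adj (hG : IsForestModel G μ) {m : ℕ} {a b : Fin m → V}
    (h : IsFreshChain G a b) {x : V} (hx : ∀ i, b i ≤ x) {v : Fin n → V} (hv : ∀ l, x ≤ v l)
    (hm : n * μ < m) : ∃ i, ∀ l, ¬ G.Adj (v l) (a i) ∧ ¬ G.Adj (v l) (b i) := by
  classical
  by_contra! hadj
  have htouch : ∀ i, ∃ l, G.Adj (a i) (v l) ∨ G.Adj (b i) (v l) := fun i => by
    obtain ⟨l, hl⟩ := hadj i
    exact ⟨l, by simpa only [G.adj_comm (v l), or_iff_not_imp_left] using hl⟩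
  choose L hL using htouch
  obtain ⟨l, hl⟩ := Fintype.exists_lt_card_fiber_of_mul_lt_card L (n := μ) (by simpa using hm)
  let e := ({i | L i = l} : Finset (Fin m)).orderEmbOfFin rfl
  have he : ∀ i, L (e i) = l := fun i =>
    (Finset.mem_filter.1 (Finset.orderEmbOfFin_mem _ rfl i)).2
  refine (hG.card_le x _ _ _ (h.comp e.strictMono).isIndMatching fun i => ?_).not_gt hl
  rcases he i ▸ hL (e i) with ha | hb
  · exact .inl ⟨(h.lt _).le.trans (hx _), v l, hv l, ha⟩
  · exact .inr ⟨hx _, v l, hv l, hb⟩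

variable [Finite V]

theorem IsNestedMatching.exists_succ {a b : Fin (n + 1) → V} (h : IsNestedMatching G a b)
    (hG : IsForestModel G μ) (hjump : level G (a 0) + (μ * μ + 2) ≤ level G (b 0)) :
    ∃ a' b' : Fin (n + 2) → V, IsNestedMatching G a' b' := by
  obtain ⟨u, v, hchain, hau, hvb, hfresh⟩ :=
    exists_isFreshChain_between (n := μ * μ + 1) hG h.lt.le (by lia)
  -- Each `b l` meets at most `μ` of the `μ * μ + 1` edges, and there are `n + 1 ≤ μ` such vertices.
  have hcard : (n + 1) * μ < μ * μ + 1 :=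
    Nat.lt_succ_of_le (Nat.mul_le_mul_right μ (h.succ_le hG))
  obtain ⟨i, hi⟩ := hchain.exists_not_adj hG hvb h.le_right hcard
  exact ⟨_, _, h.cons (hau i) (hchain.lt i) (hvb i) (hchain.adj i) (hfresh i) hi⟩

theorem exists_partition_reducing_nestedMatching {ω c : ℕ} (hG : IsForestModel G μ)
    (hω : G.CliqueFree (ω + 2)) (hc : IsChiBound μ ω c)
    (hn : ∀ a b : Fin (n + 2) → V, ¬ IsNestedMatching G a b) :
    ∃ f : V → Fin (μ * μ + 2) × Fin (privateNeighborBound (ω + 2) (μ + 1) * c + 1),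
      ∀ p, ∀ a b : Fin (n + 1) → f ⁻¹' {p}, ¬ IsNestedMatching (G.induce (f ⁻¹' {p})) a b := by
  obtain ⟨g, hg⟩ := exists_coloring_within_levels hG hω hc
  obtain ⟨f, hf⟩ := exists_partition_far_levels (level G) (show 0 < μ * μ + 2 by lia) hg
  refine ⟨f, fun p a b h => ?_⟩
  have hjump := hf (h.isIndMatching.1 0) ((a 0).2.trans (b 0).2.symm) (level_mono G h.lt.le)
  obtain ⟨a', b', h'⟩ := h.of_induce.exists_succ hG hjump
  exact hn a' b' h'

end NestedMatching

theorem colorable_of_forall_not_isNestedMatching {μ ω c : ℕ} (hc : IsChiBound μ ω c) (n : ℕ)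
    {V : Type} [PartialOrder V] [Finite V] {G : SimpleGraph V} (hG : IsForestModel G μ)
    (hω : G.CliqueFree (ω + 2)) (hn : ∀ a b : Fin (n + 1) → V, ¬ IsNestedMatching G a b) :
    G.Colorable (((μ * μ + 2) * (privateNeighborBound (ω + 2) (μ + 1) * c + 1)) ^ n) := by
  induction n generalizing V with
  | zero =>
    exact hG.colorable_one fun u v huv hadj => hn (fun _ => u) (fun _ => v)
      ⟨⟨fun _ => hadj, fun i j hij => absurd (Subsingleton.elim (α := Fin 1) i j) hij⟩,
        fun _ => le_rfl, huv, fun _ => le_rfl⟩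
  | succ n ih =>
    obtain ⟨f, hf⟩ := exists_partition_reducing_nestedMatching hG hω hc hn
    have hfiber : ∀ p, (G.induce (f ⁻¹' {p})).Colorable _ := fun p =>
      ih (hG.induce _) ((cliqueFree_induce_iff ..).2 hω.cliqueFreeOn) (hf p)
    simpa only [Fintype.card_prod, Fintype.card_fin, pow_succ'] using
      colorable_card_mul_of_fibers f hfiber

theorem exists_isChiBound (μ ω : ℕ) : ∃ c, IsChiBound μ ω c := by
  induction ω with
  | zero =>
    refine ⟨0, fun V _ _ G _ hω => ?_⟩
    have : IsEmpty V := cliqueFree_one.1 hω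
    exact .of_isEmpty 0
  | succ ω ih =>
    obtain ⟨c, hc⟩ := ih
    exact ⟨_, fun V _ _ G hG hω => colorable_of_forall_not_isNestedMatching hc μ hG hω
      fun a b h => (h.succ_le hG).not_gt μ.lt_succ_self⟩

section Dominates

variable {ι : Type*} {T : SimpleGraph ι} {r a b c : ι}

/-- The dominance relation of a graph rooted at `r`. In a tree it is the ancestor relation. -/
def Dominates (T : SimpleGraph ι) (r a b : ι) : Prop :=
  ∀ p : T.Walk r b, a ∈ p.support

namespace Dominates

theorem refl (T : SimpleGraph ι) (r a : ι) : Dominates T r a a := fun p => p.end_mem_support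

theorem trans (hab : Dominates T r a b) (hbc : Dominates T r b c) : Dominates T r a c := by
  classical
  exact fun p => p.support_takeUntil_subset_support (hbc p) (hab _)

theorem dist_lt (h : Dominates T r a b) (hb : T.Reachable r b) (hne : a ≠ b) :
    T.dist r a < T.dist r b := by
  classical
  obtain ⟨p, hp⟩ := hb.exists_walk_length_eq_dist
  calc T.dist r a ≤ (p.takeUntil a (h p)).length := dist_le _
    _ < p.length := Walk.length_takeUntil_lt_length (h p) hne
    _ = T.dist r b := hp

theorem antisymm (hT : T.Connected) (hab : Dominates T r a b) (hba : Dominates T r b a) :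
    a = b := by
  by_contra hne
  exact (hab.dist_lt (hT r b) hne).asymm (hba.dist_lt (hT r a) (Ne.symm hne))

theorem total_of_dominates (hT : T.Connected) (hac : Dominates T r a c)
    (hbc : Dominates T r b c) : Dominates T r a b ∨ Dominates T r b a := by
  classical
  wlog hdist : T.dist a c ≤ T.dist b c generalizing a b
  · exact (this hbc hac (le_of_not_ge hdist)).symm
  rcases eq_or_ne a b with rfl | hne
  · exact .inl (refl T r a)
  obtain ⟨p, hp⟩ := hT.exists_walk_length_eq_dist a c
  have hb : b ∉ p.support := fun hb =>
    ((dist_le (p.dropUntil b hb)).trans_lt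
      (Walk.length_dropUntil_lt_length hb hne.symm)).not_ge (hp ▸ hdist)
  exact .inr fun q => ((Walk.mem_support_append_iff q p).1 (hbc (q.append p))).resolve_right hb

end Dominates

/-- The dominance order of a connected graph rooted at `r`. -/
abbrev dominanceOrder (hT : T.Connected) (r : ι) : PartialOrder ι where
  le := Dominates T r
  le_refl := Dominates.refl T r
  le_trans _ _ _ := Dominates.trans
  le_antisymm _ _ := Dominates.antisymm hT

theorem exists_isPath_support_subset {s : Set ι} (hs : (T.induce s).Preconnected) (ha : a ∈ s)
    (hb : b ∈ s) : ∃ p : T.Walk a b, p.IsPath ∧ ∀ z ∈ p.support, z ∈ s := by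
  obtain ⟨p, hp⟩ := hs.exists_isPath ⟨a, ha⟩ ⟨b, hb⟩
  refine ⟨p.map (Embedding.induce s).toHom,
    hp.map (Embedding.induce (G := T) s).injective, fun z hz => ?_⟩
  obtain ⟨z, -, rfl⟩ := List.mem_map.1 (Walk.support_map _ p ▸ hz)
  exact z.2

theorem Dominates.mem_of_preconnected (hT : T.Connected) {s : Set ι}
    (hs : (T.induce s).Preconnected) {t y z : ι} (ht : t ∈ s) (hy : y ∈ s)
    (htz : Dominates T r t z) (hzy : Dominates T r z y) : z ∈ s := by
  obtain ⟨q, -, hqs⟩ := exists_isPath_support_subset hs ht hy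
  by_contra hz
  have hzt : Dominates T r z t := fun p =>
    ((Walk.mem_support_append_iff p q).1 (hzy (p.append q))).resolve_right (mt (hqs z) hz)
  exact hz (htz.antisymm hT hzt ▸ ht)

theorem isPath_append {p : T.Walk a b} {q : T.Walk b c} (hp : p.IsPath) (hq : q.IsPath)
    (h : ∀ z ∈ p.support, z ∈ q.support → z = b) : (p.append q).IsPath := by
  have hq' := hq.support_nodup
  rw [← q.cons_tail_support, List.nodup_cons] at hq'
  rw [Walk.isPath_def, Walk.support_append, List.nodup_append']
  refine ⟨hp.support_nodup, hq'.2, fun z hzp hzq => hq'.1 ?_⟩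
  exact h z hzp (List.mem_of_mem_tail hzq) ▸ hzq

theorem dominates_of_isPath (hT : T.IsAcyclic) {p : T.Walk r b} (hp : p.IsPath)
    (ha : a ∈ p.support) : Dominates T r a b := by
  classical
  intro q
  have hqp : q.bypass = p := congrArg Subtype.val
    ((hT.subsingleton_path r b).elim ⟨_, q.bypass_isPath⟩ ⟨p, hp⟩)
  exact q.support_bypass_subset_support (hqp ▸ ha)

theorem exists_mem_dominates_of_connected (hT : T.IsTree) (r : ι) {s : Set ι}
    (hs : (T.induce s).Connected) : ∃ t ∈ s, ∀ y ∈ s, Dominates T r t y := by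
  classical
  obtain ⟨⟨x, hx⟩⟩ := hs.nonempty
  obtain ⟨t, ht, hmin⟩ := exists_minimalFor_of_wellFoundedLT (· ∈ s) (T.dist r) ⟨x, hx⟩
  obtain ⟨p, hp, hlen⟩ := hT.connected.exists_path_of_dist r t
  have hps : ∀ z ∈ p.support, z ∈ s → z = t := by
    intro z hzp hzs
    by_contra hne
    have hlt : T.dist r z < T.dist r t := calc
      T.dist r z ≤ (p.takeUntil z hzp).length := dist_le _
      _ < p.length := Walk.length_takeUntil_lt_length hzp hne
      _ = T.dist r t := hlen
    exact hlt.not_ge (hmin hzs hlt.le)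
  refine ⟨t, ht, fun y hy => ?_⟩
  obtain ⟨q, hq, hqs⟩ := exists_isPath_support_subset hs.preconnected ht hy
  have hpq : (p.append q).IsPath := isPath_append hp hq fun z hzp hzq => hps z hzp (hqs z hzq)
  exact dominates_of_isPath hT.isAcyclic hpq
    ((Walk.mem_support_append_iff p q).2 (.inl p.end_mem_support))

end Dominates

theorem exists_partialOrder_monotone {V ι : Type*} [PartialOrder ι] (t : V → ι) :
    ∃ _ : PartialOrder V, Monotone t ∧ ∀ u v, t u ≤ t v ∨ t v ≤ t u → u ≤ v ∨ v ≤ u := by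
  classical
  let _ : LinearOrder V := linearOrderOfSTO WellOrderingRel
  have hinj : Function.Injective fun v : V => toLex (t v, v) := fun u v h =>
    congrArg Prod.snd (toLex.injective h)
  refine ⟨PartialOrder.lift _ hinj, fun u v h => (Prod.Lex.toLex_le_toLex'.1 h).1, fun u v h => ?_⟩
  change toLex (t u, u) ≤ toLex (t v, v) ∨ toLex (t v, v) ≤ toLex (t u, u)
  simp only [Prod.Lex.toLex_le_toLex']
  have := le_total u v
  grind

namespace TreeDecomp

variable {V : Type} {G : SimpleGraph V} {μ : ℕ}

theorem exists_isForestModel (td : TreeDecomp G) (hμ : td.MuLE μ) :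
    ∃ _ : PartialOrder V, IsForestModel G μ := by
  have hT := td.isTree.connected
  obtain ⟨r⟩ := hT.nonempty
  let _ := dominanceOrder hT r
  choose top htop htop_le using fun v =>
    exists_mem_dominates_of_connected td.isTree r (td.bag_conn v)
  obtain ⟨_, hmono, htotal⟩ := exists_partialOrder_monotone top
  have hcross : ∀ u x, u ∈ crossing G x → u ∈ td.bag (top x) := by
    rintro u x ⟨hux, w, hxw, huw⟩
    obtain ⟨y, huy, hwy⟩ := td.edge_bag huw
    exact Dominates.mem_of_preconnected hT (td.bag_conn u).preconnected (htop u) huy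
      (hmono hux) ((hmono hxw).trans (htop_le w y hwy))
  refine ⟨_, fun u v w huw hvw => ?_, fun u v huv => ?_, fun x n a b hab htouch => ?_⟩
  · exact htotal u v (Dominates.total_of_dominates hT (hmono huw) (hmono hvw))
  · obtain ⟨y, huy, hvy⟩ := td.edge_bag huv
    exact htotal u v (Dominates.total_of_dominates hT (htop_le u y huy) (htop_le v y hvy))
  · exact hμ (top x) n a b hab fun i => (htouch i).imp (hcross _ x) (hcross _ x)

/-- The tree decomposition of `G` with a single bag. -/
def trivial (G : SimpleGraph V) : TreeDecomp G where
  ι := Unit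
  fintype_ι := inferInstance
  T := ⊥
  isTree := .of_subsingleton
  bag _ := Set.univ
  mem_bag _ := ⟨(), ⟨⟩⟩
  edge_bag _ _ _ := ⟨(), ⟨⟩, ⟨⟩⟩
  bag_conn _ :=
    { preconnected := fun x y => Subsingleton.elim x y ▸ .refl x
      nonempty := ⟨⟨(), ⟨⟩⟩⟩ }

theorem muLE_natCard [Finite V] (td : TreeDecomp G) : td.MuLE (Nat.card V) :=
  fun _ _ a _ hab _ => by simpa using Nat.card_le_card_of_injective a hab.injective_left

theorem exists_muLE_of_treeMu_le [Finite V] (hμ : treeMu G ≤ μ) :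
    ∃ td : TreeDecomp G, td.MuLE μ := by
  obtain ⟨td, htd⟩ : ∃ td : TreeDecomp G, td.MuLE (treeMu G) :=
    Nat.sInf_mem (s := {n | ∃ td : TreeDecomp G, td.MuLE n})
      ⟨Nat.card V, trivial G, (trivial G).muLE_natCard⟩
  exact ⟨td, fun x n a b hab htouch => (htd x n a b hab htouch).trans hμ⟩

end TreeDecomp

/-- There is a function `f : ℕ × ℕ → ℕ` such that every finite graph with induced matching
treewidth at most `μ` and clique number at most `ω` has chromatic number at most `f (μ, ω)`. -/
theorem stmt1 :
    ∃ f : ℕ × ℕ → ℕ, ∀ (μ ω : ℕ) (V : Type) [Fintype V] (G : SimpleGraph V),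
      treeMu G ≤ μ → G.CliqueFree (ω + 1) →
      G.chromaticNumber ≤ (f (μ, ω) : ℕ∞) := by
  choose f hf using exists_isChiBound
  refine ⟨fun p => f p.1 p.2, fun μ ω V _ G hμ hω => ?_⟩
  obtain ⟨td, htd⟩ := TreeDecomp.exists_muLE_of_treeMu_le hμ
  obtain ⟨_, hG⟩ := td.exists_isForestModel htd
  exact (hf μ ω V G hG hω).chromaticNumber_le
end

section
/- For all positive integers s and t, there exists an integer M(s,t) (one may take M(s,t) = R(2t, 2t, s+1)) such that the following holds: every finite bipartite graph that contains a matching of size M(s,t) contains either an induced subgraph isomorphic to K_{t,t} or an induced matching of size s+1. -/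
open SimpleGraph

/-- `n` is large enough for the multicolour Ramsey property with target sizes `t`:
every `k`-colouring of the edges of the complete graph on `n` vertices admits, for some
colour `i`, a set of `t i` vertices all of whose connecting edges have colour `i`. -/
def RamseyProp (n : ℕ) {k : ℕ} (t : Fin k → ℕ) : Prop :=
  ∀ c : Sym2 (Fin n) → Fin k, ∃ (i : Fin k) (m : Finset (Fin n)),
    m.card = t i ∧ ∀ x ∈ m, ∀ y ∈ m, x ≠ y → c s(x, y) = i

/-- The three-colour Ramsey number `R(t₁, t₂, t₃)`. -/
noncomputable def ramsey3 (t₁ t₂ t₃ : ℕ) : ℕ := sInf {n | RamseyProp n ![t₁, t₂, t₃]}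

/-!
Orient the matching edges as `a i — b i` with `a i ∈ A`, `b i ∈ B`, and put each pair `i < j` into
one of three classes: `a i` is adjacent to `b j`; `a j` is adjacent to `b i`; neither. Ramsey's
theorem gives `2t` indices with all pairs in the first class, or in the second, or `s + 1` indices
with all pairs in the third. In the third case the chosen edges form an induced matching. In the
first, the `a i` of the first `t` indices and the `b j` of the last `t` form a `K_{t,t}`, induced
because `A` and `B` are independent; the second is the first with `A` and `B` exchanged.
-/

section Ramsey

open Finset Function

universe u

variable {κ : Type*} {t : κ → ℕ}

/-- `n` is an upper bound for the multicolour Ramsey number with target sizes `t`. In contrast to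
`RamseyProp`, the coloured set is a finite subset of an arbitrary type, so that the property passes
to the subsets that occur in the induction. -/
def IsRamseyBound (n : ℕ) (t : κ → ℕ) : Prop :=
  ∀ ⦃α : Type u⦄ (c : Sym2 α → κ) (S : Finset α), n ≤ #S →
    ∃ i, ∃ m ⊆ S, #m = t i ∧ (m : Set α).Pairwise fun x y ↦ c s(x, y) = i

theorem isRamseyBound_zero_of_eq_zero {i : κ} (hi : t i = 0) : IsRamseyBound.{u} 0 t :=
  fun _ _ S _ ↦ ⟨i, ∅, S.empty_subset, by simp [hi], by simp⟩

theorem exists_le_card_filter_eq_of_sum_le [Fintype κ] [DecidableEq κ] [Nonempty κ] {α : Type*}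
    {S : Finset α} {n : κ → ℕ} (hS : ∑ j, n j ≤ #S) (f : α → κ) :
    ∃ j, n j ≤ #{x ∈ S | f x = j} := by
  rw [card_eq_sum_card_fiberwise (f := f) (t := univ) (by simp)] at hS
  simpa using exists_le_of_sum_le univ_nonempty hS

theorem isRamseyBound_sum_add_one [Fintype κ] [DecidableEq κ] (ht : ∀ j, t j ≠ 0) {n : κ → ℕ}
    (hn : ∀ j, IsRamseyBound.{u} (n j) (update t j (t j - 1))) :
    IsRamseyBound.{u} (∑ j, n j + 1) t := by
  classical
  intro α c S hS
  obtain ⟨v, hv⟩ : S.Nonempty := card_pos.1 (by omega)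
  have : Nonempty κ := ⟨c s(v, v)⟩
  obtain ⟨j, hj⟩ := exists_le_card_filter_eq_of_sum_le
    (show ∑ j, n j ≤ #(S.erase v) by rw [card_erase_of_mem hv]; omega) (fun x ↦ c s(v, x))
  obtain ⟨i, m, hm, hcard, hmono⟩ := hn j c _ hj
  simp only [subset_iff, mem_filter, mem_erase] at hm
  have hmS : m ⊆ S := fun x hx ↦ (hm hx).1.2
  obtain rfl | hij := eq_or_ne i j
  · have hvm : v ∉ m := fun hx ↦ (hm hx).1.1 rfl
    refine ⟨i, insert v m, insert_subset hv hmS, ?_, ?_⟩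
    · rw [card_insert_of_notMem hvm, hcard, update_self, Nat.sub_add_cancel]
      exact Nat.pos_of_ne_zero (ht i)
    · rw [coe_insert]
      refine hmono.insert fun x hx _ ↦ ⟨(hm hx).2, ?_⟩
      rw [Sym2.eq_swap]
      exact (hm hx).2
  · exact ⟨i, m, hmS, by rw [hcard, update_of_ne hij], hmono⟩

theorem exists_isRamseyBound [Finite κ] (t : κ → ℕ) : ∃ n, IsRamseyBound.{u} n t := by
  classical
  have := Fintype.ofFinite κ
  induction t using WellFoundedLT.induction with
  | ind t ih =>
    by_cases ht : ∃ i, t i = 0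
    · obtain ⟨i, hi⟩ := ht
      exact ⟨0, isRamseyBound_zero_of_eq_zero hi⟩
    · push Not at ht
      have hlt (j : κ) : update t j (t j - 1) < t :=
        update_lt_self_iff.2 (Nat.sub_one_lt (ht j))
      choose n hn using fun j ↦ ih _ (hlt j)
      exact ⟨∑ j, n j + 1, isRamseyBound_sum_add_one ht hn⟩

theorem IsRamseyBound.ramseyProp {n k : ℕ} {t : Fin k → ℕ} (h : IsRamseyBound.{0} n t) :
    RamseyProp n t := by
  intro c
  obtain ⟨i, m, -, hcard, hmono⟩ := h c univ (card_fin n).ge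
  exact ⟨i, m, hcard, fun _ hx _ hy ↦ hmono hx hy⟩

theorem ramseyProp_ramsey3 (t₁ t₂ t₃ : ℕ) : RamseyProp (ramsey3 t₁ t₂ t₃) ![t₁, t₂, t₃] :=
  Nat.sInf_mem ((exists_isRamseyBound.{0} ![t₁, t₂, t₃]).imp fun _ ↦ IsRamseyBound.ramseyProp)

theorem RamseyProp.exists_orderEmbedding {n k : ℕ} {t : Fin k → ℕ} (h : RamseyProp n t)
    {r : Fin k → Fin n → Fin n → Prop} (hr : ∀ x y, ∃ i, r i x y) :
    ∃ i, ∃ e : Fin (t i) ↪o Fin n, ∀ x y, x < y → r i (e x) (e y) := by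
  choose c hc using hr
  obtain ⟨i, m, hcard, hmono⟩ := h fun p ↦ c p.inf p.sup
  have hm : ∀ x ∈ m, ∀ y ∈ m, x < y → r i x y := by
    intro x hx y hy hxy
    have hcol : c x y = i := by
      simpa only [Sym2.inf_mk, Sym2.sup_mk, inf_eq_left.2 hxy.le, sup_eq_right.2 hxy.le]
        using hmono x hx y hy hxy.ne
    exact hcol ▸ hc x y
  let e := m.orderEmbOfFin hcard
  have he (x : Fin (t i)) : e x ∈ m := m.orderEmbOfFin_mem hcard x
  exact ⟨i, e, fun x y hxy ↦ hm _ (he x) _ (he y) (e.strictMono hxy)⟩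

theorem RamseyProp.exists_orderEmbedding_three {n t₁ t₂ t₃ : ℕ} (h : RamseyProp n ![t₁, t₂, t₃])
    (p q : Fin n → Fin n → Prop) :
    (∃ e : Fin t₁ ↪o Fin n, ∀ x y, x < y → p (e x) (e y)) ∨
    (∃ e : Fin t₂ ↪o Fin n, ∀ x y, x < y → q (e x) (e y)) ∨
    ∃ e : Fin t₃ ↪o Fin n, ∀ x y, x < y → ¬ p (e x) (e y) ∧ ¬ q (e x) (e y) := by
  have hcover (x y : Fin n) : ∃ i, ![p, q, fun x y ↦ ¬ p x y ∧ ¬ q x y] i x y := by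
    by_cases hp : p x y
    · exact ⟨0, hp⟩
    · by_cases hq : q x y
      · exact ⟨1, hq⟩
      · exact ⟨2, hp, hq⟩
  obtain ⟨i, e, he⟩ := h.exists_orderEmbedding hcover
  match i with
  | 0 => exact .inl ⟨e, he⟩
  | 1 => exact .inr (.inl ⟨e, he⟩)
  | 2 => exact .inr (.inr ⟨e, he⟩)

end Ramsey

section Bipartite

variable {V α β ι κ : Type*} {G : SimpleGraph V} {A B : Set V} {a b : ι → V}

theorem not_adj_of_isBipartiteWith (hG : G.IsBipartiteWith A B) {u v : V} (hu : u ∈ A)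
    (hv : v ∈ A) : ¬ G.Adj u v :=
  fun huv ↦ hG.disjoint.notMem_of_mem_left hv (hG.mem_of_mem_adj hu huv)

theorem nonempty_completeBipartiteGraph_embedding_s3 (hG : G.IsBipartiteWith A B) (f : α ↪ V)
    (g : β ↪ V) (hf : ∀ x, f x ∈ A) (hg : ∀ y, g y ∈ B) (hadj : ∀ x y, G.Adj (f x) (g y)) :
    Nonempty (completeBipartiteGraph α β ↪g G) := by
  refine ⟨⟨⟨Sum.elim f g, f.injective.sumElim g.injective fun x y ↦ (hadj x y).ne⟩, ?_⟩⟩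
  rintro (x | x) (y | y)
  · simp [not_adj_of_isBipartiteWith hG (hf x) (hf y)]
  · simp [hadj x y]
  · simp [(hadj y x).symm]
  · simp [not_adj_of_isBipartiteWith hG.symm (hg x) (hg y)]

/-- The edges `a i — b i` form a matching of `G` between `A` and `B`, oriented from `A` to `B`.
When `A` and `B` are disjoint, injectivity of `a` and of `b` suffices for the edges to be
disjoint. -/
structure IsMatchingBetween (G : SimpleGraph V) (A B : Set V) (a b : ι → V) : Prop where
  left_mem : ∀ i, a i ∈ A
  right_mem : ∀ i, b i ∈ B
  adj : ∀ i, G.Adj (a i) (b i)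
  left_injective : Function.Injective a
  right_injective : Function.Injective b

theorem exists_isMatchingBetween (hG : G.IsBipartiteWith A B) (hadj : ∀ i, G.Adj (a i) (b i))
    (hne : ∀ i j, i ≠ j → a i ≠ a j ∧ a i ≠ b j ∧ b i ≠ a j ∧ b i ≠ b j) :
    ∃ a' b' : ι → V, IsMatchingBetween G A B a' b' := by
  have horient (i : ι) : ∃ p : V × V, p.1 ∈ A ∧ p.2 ∈ B ∧ G.Adj p.1 p.2 ∧
      (p = (a i, b i) ∨ p = (b i, a i)) := by
    obtain ⟨hA, hB⟩ | ⟨hB, hA⟩ := hG.mem_of_adj (hadj i)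
    · exact ⟨(a i, b i), hA, hB, hadj i, .inl rfl⟩
    · exact ⟨(b i, a i), hA, hB, (hadj i).symm, .inr rfl⟩
  choose p hA hB hp hpab using horient
  have hpne (i j : ι) (hij : i ≠ j) : (p i).1 ≠ (p j).1 ∧ (p i).2 ≠ (p j).2 := by
    have := hne i j hij
    rcases hpab i with hi | hi <;> rcases hpab j with hj | hj <;> rw [hi, hj] <;> tauto
  exact ⟨fun i ↦ (p i).1, fun i ↦ (p i).2, hA, hB, hp,
    Function.injective_iff_pairwise_ne.2 fun i j hij ↦ (hpne i j hij).1,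
    Function.injective_iff_pairwise_ne.2 fun i j hij ↦ (hpne i j hij).2⟩

namespace IsMatchingBetween

theorem symm (h : IsMatchingBetween G A B a b) : IsMatchingBetween G B A b a :=
  ⟨h.right_mem, h.left_mem, fun i ↦ (h.adj i).symm, h.right_injective, h.left_injective⟩

theorem comp (h : IsMatchingBetween G A B a b) {e : κ → ι} (he : Function.Injective e) :
    IsMatchingBetween G A B (a ∘ e) (b ∘ e) :=
  ⟨fun k ↦ h.left_mem (e k), fun k ↦ h.right_mem (e k), fun k ↦ h.adj (e k),
    h.left_injective.comp he, h.right_injective.comp he⟩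

theorem nonempty_completeBipartiteGraph_embedding_of_lt {m n : ℕ}
    {a b : Fin (m + n) → V} (h : IsMatchingBetween G A B a b) (hG : G.IsBipartiteWith A B)
    (hadj : ∀ i j, i < j → G.Adj (a i) (b j)) :
    Nonempty (completeBipartiteGraph (Fin m) (Fin n) ↪g G) :=
  nonempty_completeBipartiteGraph_embedding_s3 hG
    ((Fin.castAddEmb n).trans ⟨a, h.left_injective⟩)
    ((Fin.natAddEmb m).trans ⟨b, h.right_injective⟩)
    (fun _ ↦ h.left_mem _) (fun _ ↦ h.right_mem _)
    fun i j ↦ hadj _ _ (Fin.lt_def.2 (i.2.trans_le (Nat.le_add_right m j)))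

theorem isIndMatching {V : Type} {G : SimpleGraph V} {A B : Set V} {n : ℕ}
    {a b : Fin n → V} (h : IsMatchingBetween G A B a b) (hG : G.IsBipartiteWith A B)
    (hadj : ∀ i j, i ≠ j → ¬ G.Adj (a i) (b j)) : IsIndMatching G a b := by
  have hab (i j : Fin n) : a i ≠ b j := hG.disjoint.ne_of_mem (h.left_mem i) (h.right_mem j)
  refine ⟨h.adj, fun i j hij ↦ ⟨h.left_injective.ne hij, hab i j, (hab j i).symm,
    h.right_injective.ne hij, ?_, hadj i j hij, fun hba ↦ hadj j i hij.symm hba.symm, ?_⟩⟩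
  · exact not_adj_of_isBipartiteWith hG (h.left_mem i) (h.left_mem j)
  · exact not_adj_of_isBipartiteWith hG.symm (h.right_mem i) (h.right_mem j)

end IsMatchingBetween

end Bipartite

theorem stmt3_general {M s t : ℕ} (hM : RamseyProp M ![2 * t, 2 * t, s]) {V : Type}
    {G : SimpleGraph V} {A B : Set V} (hG : G.IsBipartiteWith A B) {a b : Fin M → V}
    (hadj : ∀ i, G.Adj (a i) (b i))
    (hne : ∀ i j, i ≠ j → a i ≠ a j ∧ a i ≠ b j ∧ b i ≠ a j ∧ b i ≠ b j) :
    Nonempty (completeBipartiteGraph (Fin t) (Fin t) ↪g G) ∨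
      ∃ a b : Fin s → V, IsIndMatching G a b := by
  obtain ⟨a, b, h⟩ := exists_isMatchingBetween hG hadj hne
  rw [two_mul] at hM
  obtain ⟨e, he⟩ | ⟨e, he⟩ | ⟨e, he⟩ := hM.exists_orderEmbedding_three
    (fun i j ↦ G.Adj (a i) (b j)) (fun i j ↦ G.Adj (b i) (a j))
  · exact .inl <|
      (h.comp e.injective).nonempty_completeBipartiteGraph_embedding_of_lt hG he
  · exact .inl <|
      (h.symm.comp e.injective).nonempty_completeBipartiteGraph_embedding_of_lt hG.symm he
  · refine .inr ⟨a ∘ e, b ∘ e, (h.comp e.injective).isIndMatching hG fun i j hij ↦ ?_⟩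
    obtain hlt | hgt := hij.lt_or_gt
    · exact (he i j hlt).1
    · exact fun hab ↦ (he j i hgt).2 hab.symm

/-- For all positive `s`, `t` there exists `M` (one may take `M = R(2t, 2t, s+1)`) such that
every finite bipartite graph containing a matching of size `M` contains an induced `K_{t,t}`
or an induced matching of size `s + 1`. -/
theorem stmt3 (s t : ℕ) (hs : 0 < s) (ht : 0 < t) :
    ∃ M : ℕ, M = ramsey3 (2 * t) (2 * t) (s + 1) ∧
      ∀ (V : Type) [Fintype V] (G : SimpleGraph V) (A B : Set V),
        A ∪ B = Set.univ → Disjoint A B →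
        (∀ u v : V, G.Adj u v → (u ∈ A ∧ v ∈ B) ∨ (u ∈ B ∧ v ∈ A)) →
        (∃ a b : Fin M → V, (∀ i, G.Adj (a i) (b i)) ∧
          ∀ i j : Fin M, i ≠ j → a i ≠ a j ∧ a i ≠ b j ∧ b i ≠ a j ∧ b i ≠ b j) →
        Nonempty (completeBipartiteGraph (Fin t) (Fin t) ↪g G) ∨
        (∃ a b : Fin (s + 1) → V, IsIndMatching G a b) := by
  refine ⟨_, rfl, fun V _ G A B _ hdisj hbip ⟨a, b, hadj, hne⟩ ↦ ?_⟩
  exact stmt3_general (ramseyProp_ramsey3 _ _ _) ⟨hdisj, hbip⟩ hadj hne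
end

section
/- For all positive integers s, t, and m, there exists an integer N(s,t,m) such that the following holds: if G is a finite simple K_{t,t}-free graph and I_1, …, I_m are independent sets in G, each of size at least N(s,t,m), then there exists an independent set I in G such that |I ∩ I_i| ≥ s for all i ∈ [m]. -/
open SimpleGraph

/-
A pair of large independent sets can be thinned to a pair with no edges between them: fix a small
`A₀ ⊆ A` and use pigeonhole to find many vertices of `B` with the same neighbourhood `S` in `A₀`.
If `S` is large then it forms an induced complete bipartite graph together with these vertices;
otherwise `A₀ \ S` has no edges to them. Doing this for all pairs of the given family, one after
another, leaves subsets whose union is independent.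
-/

section Anticomplete

variable {V ι α β : Type*} {G : SimpleGraph V}

/-- `A` is anticomplete to `B` in `G`: no vertex of `A` is adjacent to a vertex of `B`. The two sets
may overlap, so that a set is independent exactly when it is anticomplete to itself. -/
def IsAnticomplete (G : SimpleGraph V) (A B : Set V) : Prop :=
  ∀ ⦃a⦄, a ∈ A → ∀ ⦃b⦄, b ∈ B → ¬ G.Adj a b

lemma isAnticomplete_self_iff {A : Set V} : IsAnticomplete G A A ↔ G.IsIndepSet A :=
  ⟨fun h _ ha _ hb _ => h ha hb, fun h _ ha _ hb hab => h ha hb hab.ne hab⟩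

lemma IsAnticomplete.mono {A A' B B' : Set V} (h : IsAnticomplete G A B) (hA : A' ⊆ A)
    (hB : B' ⊆ B) : IsAnticomplete G A' B' :=
  fun _ ha _ hb => h (hA ha) (hB hb)

lemma isIndepSet_iUnion {A : ι → Set V} (h : ∀ i j, IsAnticomplete G (A i) (A j)) :
    G.IsIndepSet (⋃ i, A i) := by
  refine isAnticomplete_self_iff.mp fun a ha b hb => ?_
  obtain ⟨i, hi⟩ := Set.mem_iUnion.mp ha
  obtain ⟨j, hj⟩ := Set.mem_iUnion.mp hb
  exact h i j hi hj

lemma completeBipartiteGraph_isIndContained {A B : Set V} (hA : G.IsIndepSet A)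
    (hB : G.IsIndepSet B) (hAB : G.IsCompleteBetween A B) (f : α ↪ A) (g : β ↪ B) :
    completeBipartiteGraph α β ⊴ G := by
  have hf (i j : α) : ¬ G.Adj (f i) (f j) := isAnticomplete_self_iff.mpr hA (f i).2 (f j).2
  have hg (i j : β) : ¬ G.Adj (g i) (g j) := isAnticomplete_self_iff.mpr hB (g i).2 (g j).2
  have hfg (i : α) (j : β) : G.Adj (f i) (g j) := hAB (f i).2 (g j).2
  have hinj : Function.Injective (Sum.elim (fun i => (f i : V)) fun j => (g j : V)) :=
    (Subtype.val_injective.comp f.injective).sumElim (Subtype.val_injective.comp g.injective)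
      fun i j => (hfg i j).ne
  refine ⟨⟨⟨_, hinj⟩, ?_⟩⟩
  rintro (i | i) (j | j)
  · simp [hf]
  · simp [hfg]
  · simp [(hfg j i).symm]
  · simp [hg]

lemma exists_subset_forall_rel_iff_mem (r : α → β → Prop) {A : Finset α} {B : Finset β} {n : ℕ}
    (h : 2 ^ A.card * n ≤ B.card) :
    ∃ S ⊆ A, ∃ B' ⊆ B, n ≤ B'.card ∧ ∀ a ∈ A, ∀ b ∈ B', (r a b ↔ a ∈ S) := by
  classical
  obtain ⟨S, hS, hcard⟩ := Finset.exists_le_card_fiber_of_mul_le_card_of_maps_to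
    (f := fun b => A.filter (r · b)) (t := A.powerset)
    (fun b _ => Finset.mem_powerset.mpr (Finset.filter_subset _ A))
    (Finset.powerset_nonempty A) (by rwa [Finset.card_powerset])
  refine ⟨S, Finset.mem_powerset.mp hS, _, Finset.filter_subset _ B, hcard, fun a ha b hb => ?_⟩
  rw [← (Finset.mem_filter.mp hb).2, Finset.mem_filter, and_iff_right ha]

section Thinning

variable [Fintype α] [Fintype β]

lemma exists_subset_isAnticomplete (hG : ¬ completeBipartiteGraph α β ⊴ G) {A B : Finset V}
    (hA : G.IsIndepSet A) (hB : G.IsIndepSet B) {s : ℕ} (hAcard : s + Fintype.card α ≤ A.card)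
    (hBcard : 2 ^ (s + Fintype.card α) * max s (Fintype.card β) ≤ B.card) :
    ∃ A' ⊆ A, ∃ B' ⊆ B, s ≤ A'.card ∧ s ≤ B'.card ∧ IsAnticomplete G A' B' := by
  classical
  obtain ⟨A₀, hA₀, hA₀card⟩ := Finset.exists_subset_card_eq hAcard
  obtain ⟨S, hS, B', hB', hB'card, hadj⟩ :=
    exists_subset_forall_rel_iff_mem G.Adj (hA₀card.symm ▸ hBcard)
  have hS_card : S.card < Fintype.card α := by
    by_contra! hαS
    obtain ⟨f⟩ : Nonempty (α ↪ (S : Set V)) :=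
      Function.Embedding.nonempty_of_card_le (by simpa using hαS)
    obtain ⟨g⟩ : Nonempty (β ↪ (B' : Set V)) :=
      Function.Embedding.nonempty_of_card_le (by simpa using (le_max_right _ _).trans hB'card)
    have hcomplete : G.IsCompleteBetween S B' := fun a ha b hb => (hadj a (hS ha) b hb).mpr ha
    exact hG (completeBipartiteGraph_isIndContained (hA.mono (hS.trans hA₀)) (hB.mono hB')
      hcomplete f g)
  refine ⟨A₀ \ S, Finset.sdiff_subset.trans hA₀, B', hB', ?_, (le_max_left _ _).trans hB'card, ?_⟩
  · rw [Finset.card_sdiff_of_subset hS]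
    omega
  · intro a ha b hb hab
    obtain ⟨ha₀, haS⟩ := Finset.mem_sdiff.mp ha
    exact haS ((hadj a ha₀ b hb).mp hab)

/-- A size `n'` such that, in a graph with no induced `K_{a,b}`, any two independent sets of at
least `n'` vertices have subsets of at least `n` vertices that are anticomplete to each other. The
power of two counts the possible neighbourhoods in a set of `n + a` vertices. -/
def thinningBound (a b n : ℕ) : ℕ :=
  2 ^ (n + a) * (n + a + b)

lemma add_le_thinningBound (a b n : ℕ) : n + a ≤ thinningBound a b n :=
  (Nat.le_add_right _ b).trans (Nat.le_mul_of_pos_left _ (by positivity))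

lemma two_pow_mul_max_le_thinningBound (a b n : ℕ) :
    2 ^ (n + a) * max n b ≤ thinningBound a b n :=
  Nat.mul_le_mul_left _ (by omega)

lemma exists_le_isAnticomplete_pair (hG : ¬ completeBipartiteGraph α β ⊴ G) {I : ι → Finset V}
    (hI : ∀ i, G.IsIndepSet (I i)) {s : ℕ}
    (hcard : ∀ i, thinningBound (Fintype.card α) (Fintype.card β) s ≤ (I i).card)
    {i j : ι} (hij : i ≠ j) :
    ∃ I' ≤ I, (∀ k, s ≤ (I' k).card) ∧ IsAnticomplete G (I' i) (I' j) := by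
  classical
  obtain ⟨A, hA, B, hB, hAcard, hBcard, hAB⟩ := exists_subset_isAnticomplete hG (hI i) (hI j)
    ((add_le_thinningBound _ _ s).trans (hcard i))
    ((two_pow_mul_max_le_thinningBound _ _ s).trans (hcard j))
  have hcard' (k : ι) : s ≤ (I k).card :=
    ((Nat.le_add_right _ _).trans (add_le_thinningBound _ _ s)).trans (hcard k)
  refine ⟨Function.update (Function.update I i A) j B, ?_, fun k => ?_, ?_⟩
  · exact update_le_iff.mpr
      ⟨hB, fun k _ => (update_le_self_iff.mpr hA : Function.update I i A ≤ I) k⟩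
  · simp only [Function.update_apply]
    split_ifs
    exacts [hBcard, hAcard, hcard' k]
  · simpa [Function.update_of_ne hij] using hAB

lemma exists_le_forall_isAnticomplete (hG : ¬ completeBipartiteGraph α β ⊴ G)
    (P : Finset (ι × ι)) (hP : ∀ p ∈ P, p.1 ≠ p.2) {I : ι → Finset V}
    (hI : ∀ i, G.IsIndepSet (I i)) {s : ℕ}
    (hcard : ∀ i,
      (thinningBound (Fintype.card α) (Fintype.card β))^[P.card] s ≤ (I i).card) :
    ∃ I' ≤ I, (∀ i, s ≤ (I' i).card) ∧ ∀ p ∈ P, IsAnticomplete G (I' p.1) (I' p.2) := by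
  classical
  induction P using Finset.induction_on generalizing s with
  | empty => exact ⟨I, le_rfl, hcard, by simp⟩
  | insert q P hq ih =>
    rw [Finset.forall_mem_insert] at hP
    simp only [Finset.card_insert_of_notMem hq, Function.iterate_succ_apply] at hcard
    obtain ⟨I₁, hI₁, hcard₁, hP₁⟩ := ih hP.2 hcard
    obtain ⟨I₂, hI₂, hcard₂, hq₂⟩ :=
      exists_le_isAnticomplete_pair hG (fun i => (hI i).mono (hI₁ i)) hcard₁ hP.1
    exact ⟨I₂, hI₂.trans hI₁, hcard₂, Finset.forall_mem_insert .. |>.mpr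
      ⟨hq₂, fun p hp => (hP₁ p hp).mono (hI₂ p.1) (hI₂ p.2)⟩⟩

end Thinning

end Anticomplete

theorem stmt4_general (ι α β : Type*) [Finite ι] [Finite α] [Finite β] (s : ℕ) :
    ∃ N : ℕ, ∀ (V : Type*) (G : SimpleGraph V), ¬ completeBipartiteGraph α β ⊴ G →
      ∀ I : ι → Finset V, (∀ i, G.IsIndepSet (I i)) → (∀ i, N ≤ (I i).card) →
        ∃ J : Finset V, G.IsIndepSet J ∧ ∀ i, s ≤ ((J : Set V) ∩ (I i : Set V)).ncard := by
  classical
  have := Fintype.ofFinite ι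
  have := Fintype.ofFinite α
  have := Fintype.ofFinite β
  let P : Finset (ι × ι) := Finset.univ.offDiag
  refine ⟨(thinningBound (Fintype.card α) (Fintype.card β))^[P.card] s,
    fun V G hG I hI hcard => ?_⟩
  obtain ⟨I', hI', hcard', hanti⟩ := exists_le_forall_isAnticomplete hG P
    (fun p hp => (Finset.mem_offDiag.mp hp).2.2) hI hcard
  refine ⟨Finset.univ.biUnion I', ?_, fun i => ?_⟩
  · rw [Finset.coe_biUnion, Finset.coe_univ, Set.biUnion_univ]
    refine isIndepSet_iUnion fun i j => ?_
    obtain rfl | hij := eq_or_ne i j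
    · exact isAnticomplete_self_iff.mpr ((hI i).mono (hI' i))
    · exact hanti (i, j) (by simp [P, hij])
  · rw [← Finset.coe_inter, Set.ncard_coe_finset]
    exact (hcard' i).trans (Finset.card_le_card (Finset.subset_inter
      (Finset.subset_biUnion_of_mem I' (Finset.mem_univ i)) (hI' i)))

/-- For all positive `s`, `t`, `m` there exists `N` such that: if `G` is a finite
`K_{t,t}`-free graph and `I 1, …, I m` are independent sets each of size at least `N`,
then there is an independent set `J` with `|J ∩ I i| ≥ s` for all `i`. -/
theorem stmt4 (s t m : ℕ) (hs : 0 < s) (ht : 0 < t) (hm : 0 < m) :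
    ∃ N : ℕ, ∀ (V : Type) [Fintype V] (G : SimpleGraph V),
      IsEmpty (completeBipartiteGraph (Fin t) (Fin t) ↪g G) →
      ∀ I : Fin m → Finset V,
        (∀ i, ((I i : Set V)).Pairwise fun u v => ¬ G.Adj u v) →
        (∀ i, N ≤ (I i).card) →
        ∃ J : Finset V, ((J : Set V)).Pairwise (fun u v => ¬ G.Adj u v) ∧
          ∀ i, s ≤ ((J : Set V) ∩ (I i : Set V)).ncard := by
  obtain ⟨N, hN⟩ := stmt4_general (Fin m) (Fin t) (Fin t) s
  exact ⟨N, fun V _ G hG => hN V G (not_nonempty_iff.mpr hG)⟩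
end

section
/- Let μ and t be positive integers, let G be a finite simple K_{t,t}-free graph, let (T, β) be a tree decomposition of G with μ(T, β) ≤ μ, and let S be a maximum independent set in G. Then for every node x of T, the maximum size of an independent set of G contained in β(x) \ S is strictly less than R(2t, 2t, μ+1). -/
open SimpleGraph

/-!
If a subset `A` of an independent set `I ⊆ β(x) \ S` violated Hall's condition towards the maximum
independent set `S`, replacing the neighbours of `A` in `S` by `A` would give a larger independent
set. Hence `I` is matched into `S` by edges `aᵢbᵢ`. Colour a pair `i < j` according to whether
`aᵢbⱼ` is an edge, or else `bᵢaⱼ` is an edge, or neither. In a set of indices on which one of the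
first two colours is constant, the smaller indices on one side and the larger ones on the other
span an induced complete bipartite graph; in one of the third colour, the edges `aᵢbᵢ` form an
induced matching touching `β(x)`.
-/

universe u

section Ramsey

variable {α κ : Type*} {c : Sym2 α → κ} {t : κ → ℕ} {A : Finset α}

/-- The edge-colouring `c` has, for some colour `i`, a monochromatic clique of size `t i` inside
`A`. The values of `c` on the diagonal of `Sym2 α` are junk. -/
def HasMonoClique (c : Sym2 α → κ) (t : κ → ℕ) (A : Finset α) : Prop :=
  ∃ i, ∃ m ⊆ A, m.card = t i ∧ (m : Set α).Pairwise fun x y => c s(x, y) = i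

theorem HasMonoClique.of_eq_zero {i : κ} (hi : t i = 0) : HasMonoClique c t A :=
  ⟨i, ∅, A.empty_subset, by rw [hi, Finset.card_empty], by simp⟩

theorem HasMonoClique.of_neighbors [DecidableEq α] [DecidableEq κ] {v : α} {i : κ}
    (hi : t i ≠ 0) (hv : v ∈ A)
    (h : HasMonoClique c (Function.update t i (t i - 1)) {w ∈ A.erase v | c s(v, w) = i}) :
    HasMonoClique c t A := by
  obtain ⟨j, m, hmA, hcard, hmono⟩ := h
  have mem_of_mem {w : α} (hw : w ∈ m) : (w ≠ v ∧ w ∈ A) ∧ c s(v, w) = i := by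
    simpa only [Finset.mem_filter, Finset.mem_erase] using hmA hw
  have hm_sub : m ⊆ A := fun w hw => (mem_of_mem hw).1.2
  obtain rfl | hji := eq_or_ne j i
  · have hvm : v ∉ m := fun hvm => (mem_of_mem hvm).1.1 rfl
    refine ⟨j, insert v m, Finset.insert_subset hv hm_sub, ?_, ?_⟩
    · rw [Finset.card_insert_of_notMem hvm, hcard, Function.update_self]
      exact Nat.sub_one_add_one hi
    · rw [Finset.coe_insert]
      refine hmono.insert fun w hw _ => ⟨(mem_of_mem hw).2, ?_⟩
      rw [Sym2.eq_swap]
      exact (mem_of_mem hw).2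
  · exact ⟨j, m, hm_sub, by rwa [Function.update_of_ne hji] at hcard, hmono⟩

theorem exists_forall_hasMonoClique [Finite κ] (t : κ → ℕ) :
    ∃ N, ∀ (α : Type u) (c : Sym2 α → κ) (A : Finset α), N ≤ A.card → HasMonoClique c t A := by
  classical
  cases nonempty_fintype κ
  induction t using WellFoundedLT.induction with
  | ind t ih =>
    by_cases hzero : ∃ i, t i = 0
    · obtain ⟨i, hi⟩ := hzero
      exact ⟨0, fun _ _ _ _ => .of_eq_zero hi⟩
    push Not at hzero
    have update_lt (i : κ) : Function.update t i (t i - 1) < t :=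
      update_lt_self_iff.2 (Nat.sub_one_lt (hzero i))
    choose N hN using fun i => ih _ (update_lt i)
    refine ⟨∑ i, N i + 1, fun α c A hA => ?_⟩
    obtain ⟨v, hv⟩ := Finset.card_pos.1 (Nat.zero_lt_of_lt hA)
    have hsum : ∑ i, N i ≤ ∑ i, ({w ∈ A.erase v | c s(v, w) = i} : Finset α).card := by
      rw [← Finset.card_eq_sum_card_fiberwise (f := fun w => c s(v, w)) fun _ _ =>
        Finset.mem_coe.2 (Finset.mem_univ _), Finset.card_erase_of_mem hv]
      exact Nat.le_sub_one_of_lt hA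
    obtain ⟨i, -, hi⟩ := Finset.exists_le_of_sum_le ⟨c s(v, v), Finset.mem_univ _⟩ hsum
    exact .of_neighbors (hzero i) hv (hN i α c _ hi)

theorem exists_ramseyProp {k : ℕ} (t : Fin k → ℕ) : ∃ n, RamseyProp n t := by
  obtain ⟨N, hN⟩ := exists_forall_hasMonoClique t
  refine ⟨N, fun c => ?_⟩
  obtain ⟨i, m, -, hcard, hmono⟩ := hN (Fin N) c Finset.univ (Finset.card_fin N).ge
  exact ⟨i, m, hcard, hmono⟩

theorem RamseyProp.mono {k r n : ℕ} {t : Fin k → ℕ} (h : RamseyProp r t) (hrn : r ≤ n) :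
    RamseyProp n t := by
  intro c
  obtain ⟨i, m, hcard, hmono⟩ := h (c ∘ Sym2.map (Fin.castLE hrn))
  refine ⟨i, m.map (Fin.castLEEmb hrn), by rw [Finset.card_map, hcard], ?_⟩
  simp only [Finset.forall_mem_map]
  exact fun x hx y hy hxy => hmono x hx y hy (ne_of_apply_ne _ hxy)

theorem RamseyProp.exists_forall_lt {k n : ℕ} {t : Fin k → ℕ} (h : RamseyProp n t)
    (c : Fin n → Fin n → Fin k) :
    ∃ (i : Fin k) (m : Finset (Fin n)),
      m.card = t i ∧ ∀ x ∈ m, ∀ y ∈ m, x < y → c x y = i := by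
  obtain ⟨i, m, hcard, hmono⟩ := h fun z => c z.inf z.sup
  refine ⟨i, m, hcard, fun x hx y hy hxy => ?_⟩
  simpa only [Sym2.inf_mk, Sym2.sup_mk, inf_eq_left.2 hxy.le, sup_eq_right.2 hxy.le]
    using hmono x hx y hy hxy.ne

theorem ramseyProp_of_ramsey3_le {r s q n : ℕ} (h : ramsey3 r s q ≤ n) :
    RamseyProp n ![r, s, q] :=
  RamseyProp.mono (Nat.sInf_mem (exists_ramseyProp ![r, s, q])) h

theorem exists_forall_lt_of_ramsey3_le {r s q n : ℕ} (h : ramsey3 r s q ≤ n)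
    (P Q : Fin n → Fin n → Prop) :
    (∃ m : Finset (Fin n), m.card = r ∧ ∀ i ∈ m, ∀ j ∈ m, i < j → P i j) ∨
    (∃ m : Finset (Fin n), m.card = s ∧ ∀ i ∈ m, ∀ j ∈ m, i < j → Q i j) ∨
    ∃ m : Finset (Fin n), m.card = q ∧ ∀ i ∈ m, ∀ j ∈ m, i < j → ¬ P i j ∧ ¬ Q i j := by
  classical
  obtain ⟨color, m, hcard, hmono⟩ := (ramseyProp_of_ramsey3_le h).exists_forall_lt
    fun i j => if P i j then 0 else if Q i j then 1 else 2
  fin_cases color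
  · exact .inl ⟨m, hcard, fun i hi j hj hij => by grind [hmono i hi j hj hij]⟩
  · exact .inr (.inl ⟨m, hcard, fun i hi j hj hij => by grind [hmono i hi j hj hij]⟩)
  · exact .inr (.inr ⟨m, hcard, fun i hi j hj hij => by grind [hmono i hi j hj hij]⟩)

end Ramsey

section CompleteBipartite

variable {V : Type*} {G : SimpleGraph V}

theorem nonempty_completeBipartiteGraph_embedding_s6 {α β : Type*} {a : α → V} {b : β → V}
    (ha : Function.Injective a) (hb : Function.Injective b)
    (haa : ∀ i j, ¬ G.Adj (a i) (a j)) (hbb : ∀ i j, ¬ G.Adj (b i) (b j))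
    (hab : ∀ i j, G.Adj (a i) (b j)) :
    Nonempty (completeBipartiteGraph α β ↪g G) := by
  refine ⟨⟨⟨Sum.elim a b, ha.sumElim hb fun i j => (hab i j).ne⟩, ?_⟩⟩
  rintro (i | i) (j | j)
  · simpa using haa i j
  · simpa using hab i j
  · simpa using (hab j i).symm
  · simpa using hbb i j

theorem nonempty_completeBipartiteGraph_embedding_of_lt {ι : Type*} [LinearOrder ι]
    {a b : ι → V} (ha : Function.Injective a) (hb : Function.Injective b)
    (haa : ∀ i j, ¬ G.Adj (a i) (a j)) (hbb : ∀ i j, ¬ G.Adj (b i) (b j))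
    {s t : ℕ} {m : Finset ι} (hm : m.card = s + t)
    (hab : ∀ i ∈ m, ∀ j ∈ m, i < j → G.Adj (a i) (b j)) :
    Nonempty (completeBipartiteGraph (Fin s) (Fin t) ↪g G) := by
  let e := m.orderEmbOfFin hm
  have e_mem (i : Fin (s + t)) : e i ∈ m := m.orderEmbOfFin_mem hm i
  have e_lt (i : Fin s) (j : Fin t) : e (Fin.castAdd t i) < e (Fin.natAdd s j) :=
    e.strictMono (Fin.lt_def.2 (i.isLt.trans_le (Nat.le_add_right s j)))
  exact nonempty_completeBipartiteGraph_embedding_s6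
    (ha.comp (e.injective.comp (Fin.castAdd_injective s t)))
    (hb.comp (e.injective.comp (Fin.natAdd_injective t s)))
    (fun _ _ => haa _ _) (fun _ _ => hbb _ _)
    fun i j => hab _ (e_mem _) _ (e_mem _) (e_lt i j)

end CompleteBipartite

/-- The edges `a i — b i` form a matching of `G` whose two sides `range a` and `range b` are
independent sets. Edges `a i — b j` with `i ≠ j` are allowed, and the two sides are automatically
disjoint. -/
structure IsBipartiteMatching {V ι : Type*} (G : SimpleGraph V) (a b : ι → V) : Prop where
  injective_left : Function.Injective a
  injective_right : Function.Injective b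
  adj : ∀ i, G.Adj (a i) (b i)
  not_adj_left : ∀ i j, ¬ G.Adj (a i) (a j)
  not_adj_right : ∀ i j, ¬ G.Adj (b i) (b j)

namespace IsBipartiteMatching

theorem comp {V ι κ : Type*} {G : SimpleGraph V} {a b : ι → V} (h : IsBipartiteMatching G a b)
    {e : κ → ι} (he : Function.Injective e) : IsBipartiteMatching G (a ∘ e) (b ∘ e) where
  injective_left := h.injective_left.comp he
  injective_right := h.injective_right.comp he
  adj i := h.adj (e i)
  not_adj_left i j := h.not_adj_left (e i) (e j)
  not_adj_right i j := h.not_adj_right (e i) (e j)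

theorem left_ne_right {V ι : Type*} {G : SimpleGraph V} {a b : ι → V}
    (h : IsBipartiteMatching G a b) (i j : ι) : a i ≠ b j := fun hij =>
  h.not_adj_left i j (hij ▸ (h.adj j).symm)

theorem isIndMatching {V : Type} {G : SimpleGraph V} {n : ℕ} {a b : Fin n → V}
    (h : IsBipartiteMatching G a b) (hab : ∀ i j, i ≠ j → ¬ G.Adj (a i) (b j)) :
    IsIndMatching G a b :=
  ⟨h.adj, fun i j hij =>
    ⟨h.injective_left.ne hij, h.left_ne_right i j, (h.left_ne_right j i).symm,
      h.injective_right.ne hij, h.not_adj_left i j, hab i j hij,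
      fun hadj => hab j i hij.symm hadj.symm, h.not_adj_right i j⟩⟩

theorem isIndMatching_of_lt {V : Type} {ι : Type*} [LinearOrder ι] {G : SimpleGraph V}
    {a b : ι → V} (h : IsBipartiteMatching G a b) {k : ℕ} {m : Finset ι} (hm : m.card = k)
    (hlt : ∀ i ∈ m, ∀ j ∈ m, i < j → ¬ G.Adj (a i) (b j) ∧ ¬ G.Adj (b i) (a j)) :
    IsIndMatching G (a ∘ m.orderEmbOfFin hm) (b ∘ m.orderEmbOfFin hm) := by
  let e := m.orderEmbOfFin hm
  have e_mem (i : Fin k) : e i ∈ m := m.orderEmbOfFin_mem hm i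
  refine (h.comp e.injective).isIndMatching fun i j hij => ?_
  obtain hij | hji := lt_or_gt_of_ne hij
  · exact (hlt _ (e_mem i) _ (e_mem j) (e.strictMono hij)).1
  · exact fun hadj => (hlt _ (e_mem j) _ (e_mem i) (e.strictMono hji)).2 hadj.symm

end IsBipartiteMatching

section MaximumIndependentSet

variable {V : Type*} {G : SimpleGraph V} {S : Finset V}

theorem card_le_card_biUnion_filter_adj [DecidableEq V] [DecidableRel G.Adj]
    (hSind : G.IsIndepSet S) (hSmax : ∀ J : Finset V, G.IsIndepSet J → J.card ≤ S.card)
    {A : Finset V} (hAS : Disjoint A S) (hAind : G.IsIndepSet A) :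
    A.card ≤ (A.biUnion fun v => S.filter (G.Adj v)).card := by
  set N := A.biUnion fun v => S.filter (G.Adj v)
  have hNS : N ⊆ S := Finset.biUnion_subset.2 fun v _ => Finset.filter_subset _ _
  have not_adj {v w : V} (hv : v ∈ A) (hw : w ∈ S \ N) : ¬ G.Adj v w := by
    obtain ⟨hwS, hwN⟩ := Finset.mem_sdiff.1 hw
    exact fun hvw => hwN (Finset.mem_biUnion.2 ⟨v, hv, Finset.mem_filter.2 ⟨hwS, hvw⟩⟩)
  have hind : G.IsIndepSet (A ∪ S \ N : Finset V) := by
    rw [Finset.coe_union, isIndepSet_iff, Set.pairwise_union]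
    exact ⟨hAind, hSind.mono (Finset.coe_subset.2 Finset.sdiff_subset), fun v hv w hw _ =>
      ⟨not_adj hv hw, fun hwv => not_adj hv hw hwv.symm⟩⟩
  have hexchange : A.card + (S \ N).card ≤ S.card := by
    rw [← Finset.card_union_of_disjoint (hAS.mono_right Finset.sdiff_subset)]
    exact hSmax _ hind
  have hsplit : (S \ N).card + N.card = S.card := Finset.card_sdiff_add_card_eq_card hNS
  lia

theorem exists_isBipartiteMatching
    (hSind : G.IsIndepSet S) (hSmax : ∀ J : Finset V, G.IsIndepSet J → J.card ≤ S.card)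
    {I : Finset V} (hIS : Disjoint I S) (hIind : G.IsIndepSet I) :
    ∃ f : I → V, IsBipartiteMatching G Subtype.val f := by
  classical
  have hall (A : Finset I) : A.card ≤ (A.biUnion fun v => S.filter (G.Adj v)).card := by
    have hAI : A.image Subtype.val ⊆ I := Finset.image_subset_iff.2 fun v _ => v.2
    simpa only [Finset.card_image_of_injective A Subtype.val_injective, Finset.image_biUnion] using
      card_le_card_biUnion_filter_adj hSind hSmax (hIS.mono_left hAI)
        (hIind.mono (Finset.coe_subset.2 hAI))
  obtain ⟨f, hf, hfmem⟩ := (Finset.all_card_le_biUnion_card_iff_exists_injective _).1 hall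
  simp only [Finset.mem_filter] at hfmem
  exact ⟨f, Subtype.val_injective, hf, fun v => (hfmem v).2,
    fun v w h => hIind v.2 w.2 h.ne h,
    fun v w h => hSind (hfmem v).1 (hfmem w).1 h.ne h⟩

end MaximumIndependentSet

theorem IsBipartiteMatching.lt_ramsey3 {V : Type} {G : SimpleGraph V} {n μ s t : ℕ}
    {a b : Fin n → V} (h : IsBipartiteMatching G a b)
    (hfree : IsEmpty (completeBipartiteGraph (Fin s) (Fin t) ↪g G))
    (hμ : ∀ (k : ℕ) (e : Fin k → Fin n), IsIndMatching G (a ∘ e) (b ∘ e) → k ≤ μ) :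
    n < ramsey3 (s + t) (s + t) (μ + 1) := by
  by_contra! hn
  rw [← not_nonempty_iff] at hfree
  obtain ⟨m, hm, hab⟩ | ⟨m, hm, hba⟩ | ⟨m, hm, hnone⟩ := exists_forall_lt_of_ramsey3_le hn
    (fun i j => G.Adj (a i) (b j)) (fun i j => G.Adj (b i) (a j))
  · exact hfree <| nonempty_completeBipartiteGraph_embedding_of_lt h.injective_left
      h.injective_right h.not_adj_left h.not_adj_right hm hab
  · exact hfree <| nonempty_completeBipartiteGraph_embedding_of_lt h.injective_right
      h.injective_left h.not_adj_right h.not_adj_left hm hba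
  · exact (hμ _ _ (h.isIndMatching_of_lt hm hnone)).not_gt μ.lt_succ_self

theorem stmt6_general {V : Type} {G : SimpleGraph V} {μ s t : ℕ}
    (hfree : IsEmpty (completeBipartiteGraph (Fin s) (Fin t) ↪g G))
    {X : Set V} (hX : ∀ (n : ℕ) (a b : Fin n → V),
      IsIndMatching G a b → (∀ i, a i ∈ X ∨ b i ∈ X) → n ≤ μ)
    {S : Finset V} (hSind : G.IsIndepSet S)
    (hSmax : ∀ J : Finset V, G.IsIndepSet J → J.card ≤ S.card)
    {I : Finset V} (hI : ↑I ⊆ X \ ↑S) (hIind : G.IsIndepSet I) :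
    I.card < ramsey3 (s + t) (s + t) (μ + 1) := by
  have hIS : Disjoint I S := Finset.disjoint_left.2 fun v hv => (hI hv).2
  obtain ⟨f, hf⟩ := exists_isBipartiteMatching hSind hSmax hIS hIind
  refine (hf.comp I.equivFin.symm.injective).lt_ramsey3 hfree fun k e he => ?_
  exact hX k _ _ he fun i => .inl (hI (I.equivFin.symm (e i)).2).1

/-- Let `G` be a finite `K_{t,t}`-free graph, `(T, β)` a tree decomposition with
`μ(T,β) ≤ μ`, and `S` a maximum independent set of `G`. Then every independent set
contained in `β(x) \ S` has size strictly less than `R(2t, 2t, μ+1)`. -/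
theorem stmt6 (μ t : ℕ) (hμ : 0 < μ) (ht : 0 < t) (V : Type) [Fintype V]
    (G : SimpleGraph V)
    (hfree : IsEmpty (completeBipartiteGraph (Fin t) (Fin t) ↪g G))
    (td : TreeDecomp G) (htd : td.MuLE μ)
    (S : Finset V) (hSind : ((S : Set V)).Pairwise fun u v => ¬ G.Adj u v)
    (hSmax : ∀ I : Finset V, ((I : Set V)).Pairwise (fun u v => ¬ G.Adj u v) →
      I.card ≤ S.card)
    (x : td.ι) (I : Finset V) (hI : ↑I ⊆ td.bag x \ ↑S)
    (hIind : ((I : Set V)).Pairwise fun u v => ¬ G.Adj u v) :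
    I.card < ramsey3 (2 * t) (2 * t) (μ + 1) := by
  rw [two_mul]
  exact stmt6_general hfree (htd x) hSind hSmax hI hIind
end

section
/- For all positive integers μ and t, there exist integers m and c such that the following holds: if G is a finite simple K_{t,t}-free graph, (T, β) is a tree decomposition of G with μ(T, β) ≤ μ, x is a node of T, and S' ⊆ β(x) is an independent set of G with α(G[N(v)]) ≥ c for every v ∈ S', then |S'| < m. -/
open SimpleGraph

/-!
Take many vertices of the independent set, each with many pairwise non-adjacent neighbours, as the
centres and labelled leaves of stars. By Ramsey's theorem we may assume that the edges between the
`i`-th and the `j`-th star, `i < j`, depend only on the leaf labels. Fewer than `t` labels give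
leaves adjacent to earlier centres, since `t` such leaves of the last star would form a `K_{t,t}`
with the earlier centres; likewise for later centres. Among the remaining labels, a second
application of Ramsey's theorem gives a large set of labels such that, either for all `a < b` in it
or for none, the leaf `a` of an earlier star is adjacent to the leaf `b` of a later one. The first
case puts a `K_{t,t}` on the leaves of any two stars. In the second, joining the `i`-th centre to
its leaf with the `i`-th label gives an induced matching.
-/

universe u

section Ramsey

open Finset

theorem exists_subset_color_eq_of_left (κ : Type*) [Finite κ] [Nonempty κ] (n : ℕ) :
    ∃ N : ℕ, ∀ {α : Type u} [LinearOrder α] (f : α → α → κ) (s : Finset α), N ≤ #s →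
      ∃ t ⊆ s, #t = n ∧ ∃ c : α → κ, ∀ x ∈ t, ∀ y ∈ t, x < y → f x y = c x := by
  classical
  have := Fintype.ofFinite κ
  induction n with
  | zero => exact ⟨0, fun f s _ => ⟨∅, empty_subset s, card_empty, Classical.arbitrary _, by simp⟩⟩
  | succ n ih =>
    obtain ⟨N, hN⟩ := ih
    refine ⟨Fintype.card κ * N + 1, fun f s hs => ?_⟩
    have hne : s.Nonempty := card_pos.1 (by lia)
    set a := s.min' hne
    obtain ⟨k, -, hk⟩ : ∃ k ∈ univ, N ≤ #{y ∈ s.erase a | f a y = k} := by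
      refine exists_le_card_fiber_of_mul_le_card_of_maps_to (fun _ _ => mem_univ _) univ_nonempty ?_
      rw [card_erase_of_mem (s.min'_mem hne), card_univ]
      lia
    obtain ⟨t, hts, htn, c, hc⟩ := hN f _ hk
    have ht : ∀ y ∈ t, (y ≠ a ∧ y ∈ s) ∧ f a y = k := fun y hy => by simpa using hts hy
    have hat : a ∉ t := fun h => (ht a h).1.1 rfl
    refine ⟨insert a t, insert_subset (s.min'_mem hne) fun y hy => (ht y hy).1.2,
      by rw [card_insert_of_notMem hat, htn], Function.update c a k, fun x hx y hy hxy => ?_⟩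
    have hyt : y ∈ t := (mem_insert.1 hy).resolve_left fun h =>
      (h ▸ hxy).not_ge <| s.min'_le x <| by
        rcases mem_insert.1 hx with rfl | hx
        exacts [s.min'_mem hne, (ht x hx).1.2]
    rcases mem_insert.1 hx with rfl | hxt
    · rw [Function.update_self, (ht y hyt).2]
    · rw [Function.update_of_ne (ht x hxt).1.1, hc x hxt y hyt hxy]

theorem exists_monochromatic_orderEmbedding (κ : Type*) [Finite κ] [Nonempty κ] (n : ℕ) :
    ∃ N : ℕ, ∀ {α : Type u} [LinearOrder α] (f : α → α → κ) (s : Finset α), N ≤ #s →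
      ∃ (g : Fin n ↪o α) (k : κ), (∀ i, g i ∈ s) ∧ ∀ i j, i < j → f (g i) (g j) = k := by
  classical
  have := Fintype.ofFinite κ
  obtain ⟨N, hN⟩ := exists_subset_color_eq_of_left κ (Fintype.card κ * n)
  refine ⟨N, fun f s hs => ?_⟩
  obtain ⟨t, hts, htn, c, hc⟩ := hN f s hs
  obtain ⟨k, -, hk⟩ : ∃ k ∈ univ, n ≤ #{x ∈ t | c x = k} :=
    exists_le_card_fiber_of_mul_le_card_of_maps_to (fun _ _ => mem_univ _) univ_nonempty
      (by rw [card_univ, htn])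
  obtain ⟨r, hrt, hrn⟩ := exists_subset_card_eq hk
  have hr : ∀ i, r.orderEmbOfFin hrn i ∈ t ∧ c (r.orderEmbOfFin hrn i) = k := fun i =>
    mem_filter.1 (hrt (r.orderEmbOfFin_mem hrn i))
  refine ⟨r.orderEmbOfFin hrn, k, fun i => hts (hr i).1, fun i j hij => ?_⟩
  rw [hc _ (hr i).1 _ (hr j).1 ((r.orderEmbOfFin hrn).strictMono hij), (hr i).2]

end Ramsey

section Stars

open Finset

variable {V ι κ : Type*} {G : SimpleGraph V} {t : ℕ}

theorem card_lt_of_isEmpty_completeBipartiteGraph_embedding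
    (hG : IsEmpty (completeBipartiteGraph (Fin t) (Fin t) ↪g G)) {X Y : Finset V}
    (hX : G.IsIndepSet X) (hY : G.IsIndepSet Y) (hXY : ∀ x ∈ X, ∀ y ∈ Y, G.Adj x y)
    (ht : t ≤ #X) : #Y < t := by
  by_contra! htY
  obtain ⟨l, hl⟩ := Function.Embedding.exists_of_card_le_finset (α := Fin t) (s := X) (by simpa)
  obtain ⟨r, hr⟩ := Function.Embedding.exists_of_card_le_finset (α := Fin t) (s := Y) (by simpa)
  rw [Set.range_subset_iff] at hl hr
  have hlr : ∀ i j, G.Adj (l i) (r j) := fun i j => hXY _ (hl i) _ (hr j)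
  have hll : ∀ i j, ¬ G.Adj (l i) (l j) := fun i j h => hX (hl i) (hl j) h.ne h
  have hrr : ∀ i j, ¬ G.Adj (r i) (r j) := fun i j h => hY (hr i) (hr j) h.ne h
  refine hG.false ⟨⟨Sum.elim l r, l.injective.sumElim r.injective fun i j => (hlr i j).ne⟩, ?_⟩
  rintro (i | i) (j | j) <;> simp [hlr, hll, hrr, G.adj_comm (r _) (l _)]

/-- A family of induced stars with distinct, pairwise non-adjacent centres `v i`, where `w i`
enumerates the leaves of the star at `v i`. Different stars may share leaves, and any edges between
different stars are allowed except those joining two centres. -/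
structure IsStarFamily (G : SimpleGraph V) (v : ι ↪ V) (w : ι → κ ↪ V) : Prop where
  isIndepSet_center : G.IsIndepSet (Set.range v)
  isIndepSet_leaf : ∀ i, G.IsIndepSet (Set.range (w i))
  adj : ∀ i a, G.Adj (v i) (w i a)

theorem IsStarFamily.comp {ι' : Type*} {v : ι ↪ V} {w : ι → κ ↪ V} (h : IsStarFamily G v w)
    (g : ι' ↪ ι) : IsStarFamily G (g.trans v) (w ∘ g) where
  isIndepSet_center := h.isIndepSet_center.mono (Set.range_comp_subset_range g v)
  isIndepSet_leaf i := h.isIndepSet_leaf (g i)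
  adj i := h.adj (g i)

theorem exists_isStarFamily {m c : ℕ} {S : Finset V} (hS : G.IsIndepSet S) (hm : m ≤ #S)
    (hc : ∀ v ∈ S, ∃ I : Finset V, ↑I ⊆ G.neighborSet v ∧ G.IsIndepSet I ∧ c ≤ #I) :
    ∃ (v : Fin m ↪ V) (w : Fin m → Fin c ↪ V), Set.range v ⊆ S ∧ IsStarFamily G v w := by
  obtain ⟨v, hv⟩ := Function.Embedding.exists_of_card_le_finset (α := Fin m) (s := S) (by simpa)
  have hw : ∀ i, ∃ w : Fin c ↪ V, G.IsIndepSet (Set.range w) ∧ ∀ a, G.Adj (v i) (w a) := by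
    intro i
    obtain ⟨I, hIv, hI, hcI⟩ := hc (v i) (hv ⟨i, rfl⟩)
    obtain ⟨w, hw⟩ := Function.Embedding.exists_of_card_le_finset (α := Fin c) (s := I) (by simpa)
    exact ⟨w, hI.mono hw, fun a => hIv (hw ⟨a, rfl⟩)⟩
  choose w hw hvw using hw
  exact ⟨v, w, hv, hS.mono hv, hw, hvw⟩

/-- A star family in which the adjacencies between two stars `i < j` depend only on the leaf labels:
`A` is the set of labels of the leaves of `j` adjacent to `v i`, `B` that of the leaves of `i`
adjacent to `v j`, and `R` records the adjacencies between leaves. It is what Ramsey's theorem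
extracts from a star family. -/
structure IsUniformStarFamily [LT ι] (G : SimpleGraph V) (v : ι ↪ V) (w : ι → κ ↪ V)
    (A B : Finset κ) (R : κ → κ → Prop) : Prop extends IsStarFamily G v w where
  adj_center_leaf_iff : ∀ {i j}, i < j → ∀ a, G.Adj (v i) (w j a) ↔ a ∈ A
  adj_leaf_center_iff : ∀ {i j}, i < j → ∀ a, G.Adj (w i a) (v j) ↔ a ∈ B
  adj_leaf_leaf_iff : ∀ {i j}, i < j → ∀ a b, G.Adj (w i a) (w j b) ↔ R a b

theorem exists_isUniformStarFamily_comp (κ : Type*) [Finite κ] (n : ℕ) :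
    ∃ m : ℕ, ∀ {V : Type u} {G : SimpleGraph V} {v : Fin m ↪ V} {w : Fin m → κ ↪ V},
      IsStarFamily G v w → ∃ (g : Fin n ↪o Fin m) (A B : Finset κ) (R : κ → κ → Prop),
        IsUniformStarFamily G (g.toEmbedding.trans v) (w ∘ g) A B R := by
  classical
  have := Fintype.ofFinite κ
  obtain ⟨m, hm⟩ :=
    exists_monochromatic_orderEmbedding (Finset κ × Finset κ × (κ → κ → Prop)) n
  refine ⟨m, fun {V G v w} h => ?_⟩
  obtain ⟨g, ⟨A, B, R⟩, -, hg⟩ := hm (fun i j : Fin m =>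
    (({a | G.Adj (v i) (w j a)} : Finset κ), ({a | G.Adj (w i a) (v j)} : Finset κ),
      fun a b => G.Adj (w i a) (w j b))) univ (by simp)
  simp only [Prod.mk.injEq, Finset.ext_iff, mem_filter_univ, funext_iff, eq_iff_iff] at hg
  exact ⟨g, A, B, R, h.comp g.toEmbedding, fun hij => (hg _ _ hij).1,
    fun hij => (hg _ _ hij).2.1, fun hij => (hg _ _ hij).2.2⟩

namespace IsStarFamily

variable {v : ι ↪ V} {w : ι → κ ↪ V}

theorem card_lt_of_forall_adj_center (h : IsStarFamily G v w)
    (hG : IsEmpty (completeBipartiteGraph (Fin t) (Fin t) ↪g G)) {s : Finset ι} {A : Finset κ}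
    {j : ι} (hadj : ∀ i ∈ s, ∀ a ∈ A, G.Adj (v i) (w j a)) (ht : t ≤ #s) : #A < t := by
  rw [← card_map (w j)]
  refine card_lt_of_isEmpty_completeBipartiteGraph_embedding hG (X := s.map v)
    (h.isIndepSet_center.mono (by simp)) ((h.isIndepSet_leaf j).mono (by simp)) ?_
    (by rwa [card_map])
  simpa only [forall_mem_map] using hadj

theorem card_lt_of_forall_adj_leaf (h : IsStarFamily G v w)
    (hG : IsEmpty (completeBipartiteGraph (Fin t) (Fin t) ↪g G)) {i j : ι} {A B : Finset κ}
    (hadj : ∀ a ∈ A, ∀ b ∈ B, G.Adj (w i a) (w j b)) (ht : t ≤ #A) : #B < t := by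
  rw [← card_map (w j)]
  refine card_lt_of_isEmpty_completeBipartiteGraph_embedding hG (X := A.map (w i))
    ((h.isIndepSet_leaf i).mono (by simp)) ((h.isIndepSet_leaf j).mono (by simp)) ?_
    (by rwa [card_map])
  simpa only [forall_mem_map] using hadj

end IsStarFamily

namespace IsUniformStarFamily

variable {v : ι ↪ V} {w : ι → κ ↪ V} {A B : Finset κ} {R : κ → κ → Prop}

theorem card_lt_of_le_card_Iio [Preorder ι] [LocallyFiniteOrderBot ι]
    (h : IsUniformStarFamily G v w A B R)
    (hG : IsEmpty (completeBipartiteGraph (Fin t) (Fin t) ↪g G)) {j : ι} (hj : t ≤ #(Iio j)) :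
    #A < t :=
  h.card_lt_of_forall_adj_center hG
    (fun _ hi a ha => (h.adj_center_leaf_iff (mem_Iio.1 hi) a).2 ha) hj

theorem card_lt_of_le_card_Ioi [Preorder ι] [LocallyFiniteOrderTop ι]
    (h : IsUniformStarFamily G v w A B R)
    (hG : IsEmpty (completeBipartiteGraph (Fin t) (Fin t) ↪g G)) {i : ι} (hi : t ≤ #(Ioi i)) :
    #B < t :=
  h.card_lt_of_forall_adj_center hG
    (fun _ hj a ha => ((h.adj_leaf_center_iff (mem_Ioi.1 hj) a).2 ha).symm) hi

theorem exists_lt_not_rel [LT ι] (h : IsUniformStarFamily G v w A B R)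
    (hG : IsEmpty (completeBipartiteGraph (Fin t) (Fin t) ↪g G)) {i j : ι} (hij : i < j)
    {n : ℕ} (hn : t + t ≤ n) (q : Fin n ↪ κ) : ∃ k l, k < l ∧ ¬ R (q k) (q l) := by
  by_contra! hR
  obtain ⟨n, rfl⟩ := Nat.exists_eq_add_of_le hn
  have hlt := h.card_lt_of_forall_adj_leaf hG (i := i) (j := j)
    (A := univ.map (((Fin.castAddEmb t).trans (Fin.castAddEmb n)).trans q))
    (B := univ.map (((Fin.natAddEmb t).trans (Fin.castAddEmb n)).trans q))
    (by
      simp only [forall_mem_map, h.adj_leaf_leaf_iff hij]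
      exact fun k _ l _ => hR _ _ (show (k : ℕ) < t + l by lia))
    (by simp)
  simp at hlt

end IsUniformStarFamily

end Stars

section InducedMatching

open Finset

variable {V : Type} {G : SimpleGraph V} {n t : ℕ}

theorem IsIndMatching.of_not_adj {a b : Fin n → V} (hab : ∀ i, G.Adj (a i) (b i))
    (haa : ∀ i j, ¬ G.Adj (a i) (a j)) (hne : ∀ i j, i ≠ j → ¬ G.Adj (a i) (b j))
    (hbb : ∀ i j, i < j → ¬ G.Adj (b i) (b j)) : IsIndMatching G a b := by
  have hbb' : ∀ i j, i ≠ j → ¬ G.Adj (b i) (b j) := fun i j hij =>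
    hij.lt_or_gt.elim (hbb i j) fun hji hadj => hbb j i hji hadj.symm
  have hdisj : ∀ i j, a i ≠ b j := fun i j h => haa j i (h ▸ hab j)
  exact ⟨hab, fun i j hij => ⟨fun h => hne i j hij (h ▸ hab j), hdisj i j, (hdisj j i).symm,
    fun h => hne i j hij (h ▸ hab i), haa i j, hne i j hij, fun h => hne j i hij.symm h.symm,
    hbb' i j hij⟩⟩

namespace IsUniformStarFamily

theorem isIndMatching {κ : Type*} {v : Fin n ↪ V} {w : Fin n → κ ↪ V} {A B : Finset κ}
    {R : κ → κ → Prop} (h : IsUniformStarFamily G v w A B R) {q : Fin n → κ}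
    (hA : ∀ i, q i ∉ A) (hB : ∀ i, q i ∉ B) (hR : ∀ i j, i < j → ¬ R (q i) (q j)) :
    IsIndMatching G v fun i => w i (q i) := by
  refine .of_not_adj (fun i => h.adj i _)
    (fun i j hadj => h.isIndepSet_center ⟨i, rfl⟩ ⟨j, rfl⟩ hadj.ne hadj) (fun i j hij hadj => ?_)
    (fun i j hij hadj => hR i j hij ((h.adj_leaf_leaf_iff hij _ _).1 hadj))
  rcases hij.lt_or_gt with hij | hji
  · exact hA j ((h.adj_center_leaf_iff hij _).1 hadj)
  · exact hB j ((h.adj_leaf_center_iff hji _).1 hadj.symm)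

theorem exists_isIndMatching (ht : t < n) :
    ∃ c : ℕ, ∀ {V : Type} {G : SimpleGraph V} {v : Fin (n + 1) ↪ V} {w : Fin (n + 1) → Fin c ↪ V}
      {A B : Finset (Fin c)} {R : Fin c → Fin c → Prop},
      IsEmpty (completeBipartiteGraph (Fin t) (Fin t) ↪g G) → IsUniformStarFamily G v w A B R →
      ∃ b : Fin (n + 1) → V, IsIndMatching G v b := by
  obtain ⟨N, hN⟩ := exists_monochromatic_orderEmbedding Prop (t + t + (n + 1))
  refine ⟨N + (t + t), fun {V G v w A B R} hG h => ?_⟩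
  have hA : #A < t := h.card_lt_of_le_card_Iio hG (j := Fin.last n) (by simpa using ht.le)
  have hB : #B < t := h.card_lt_of_le_card_Ioi hG (i := 0) (by simpa using ht.le)
  have hAB : N ≤ #(A ∪ B)ᶜ := by
    have := card_union_le A B
    rw [card_compl, Fintype.card_fin]
    lia
  obtain ⟨q, r, hq, hR⟩ := hN R _ hAB
  have h0 : (0 : Fin (n + 1)) < Fin.last n := Fin.lt_def.2 (Nat.zero_lt_of_lt ht)
  obtain ⟨k, l, hkl, hnot⟩ := h.exists_lt_not_rel hG h0 (Nat.le_add_right _ _)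
    q.toEmbedding
  have hr : ¬ r := by rwa [← hR k l hkl]
  simp only [mem_compl, mem_union, not_or] at hq
  refine ⟨_, h.isIndMatching (q := q ∘ Fin.natAddEmb (t + t)) (fun i => (hq _).1)
    (fun i => (hq _).2) fun i j hij => ?_⟩
  rw [Function.comp_apply, Function.comp_apply, hR _ _ (by simpa using hij)]
  exact hr

end IsUniformStarFamily

end InducedMatching

theorem stmt8_general (μ t : ℕ) :
    ∃ m c : ℕ, ∀ (V : Type) (G : SimpleGraph V),
      IsEmpty (completeBipartiteGraph (Fin t) (Fin t) ↪g G) →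
      ∀ X : Set V, (∀ (n : ℕ) (a b : Fin n → V),
        IsIndMatching G a b → (∀ i, a i ∈ X ∨ b i ∈ X) → n ≤ μ) →
        ∀ S' : Finset V, ↑S' ⊆ X → G.IsIndepSet S' →
          (∀ v ∈ S', ∃ I : Finset V, ↑I ⊆ G.neighborSet v ∧ G.IsIndepSet I ∧ c ≤ I.card) →
          S'.card < m := by
  obtain ⟨c, hc⟩ :=
    IsUniformStarFamily.exists_isIndMatching (t := t) (n := μ + t + 1) (by lia)
  obtain ⟨m, hm⟩ := exists_isUniformStarFamily_comp (Fin c) (μ + t + 1 + 1)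
  refine ⟨m, c, fun V G hG X hX S' hSX hS hI => ?_⟩
  by_contra! hcard
  obtain ⟨v, w, hvS, hvw⟩ := exists_isStarFamily hS hcard hI
  obtain ⟨g, A, B, R, huniform⟩ := hm hvw
  obtain ⟨b, hb⟩ := hc hG huniform
  have := hX _ _ b hb fun i => .inl (hSX (hvS ⟨g i, rfl⟩))
  lia

/-- For all positive `μ` and `t` there exist integers `m` and `c` such that: in any finite
`K_{t,t}`-free graph `G` with a tree decomposition `(T,β)` satisfying `μ(T,β) ≤ μ`, any
independent set `S' ⊆ β(x)` all of whose vertices `v` satisfy `α(G[N(v)]) ≥ c` has size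
less than `m`. -/
theorem stmt8 (μ t : ℕ) (hμ : 0 < μ) (ht : 0 < t) :
    ∃ m c : ℕ, ∀ (V : Type) [Fintype V] (G : SimpleGraph V),
      IsEmpty (completeBipartiteGraph (Fin t) (Fin t) ↪g G) →
      ∀ td : TreeDecomp G, td.MuLE μ →
        ∀ (x : td.ι) (S' : Finset V), ↑S' ⊆ td.bag x →
          ((S' : Set V)).Pairwise (fun u v => ¬ G.Adj u v) →
          (∀ v ∈ S', ∃ I : Finset V, ↑I ⊆ G.neighborSet v ∧
            ((I : Set V)).Pairwise (fun u w => ¬ G.Adj u w) ∧ c ≤ I.card) →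
          S'.card < m := by
  obtain ⟨m, c, h⟩ := stmt8_general μ t
  exact ⟨m, c, fun V _ G hG td hmu x S hSx hS hI => h V G hG (td.bag x) (hmu x) S hSx hS hI⟩
end
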